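/- Let n ≥ 2 and define the n-tuple of quadratic forms on ℝ^{n+1} by Q(ξ) = (ξ_1², ξ_1ξ_2, …, ξ_1ξ_{n−1}, ξ_1ξ_n + ξ_{n+1}²). Then for every ε > 0 and every p with 2 ≤ p ≤ n + 3 there exists a constant C = C(ε, p, n) such that for every R ≥ 1, every c ∈ [0, 1 − R^{−1/2}], and every measurable function f : [0,1]^{n+1} → ℂ with supp f ⊂ [0,1]^n × [c, c + R^{−1/2}], one has ‖E^Q f‖_{L^p(B_R^{2n+1})} ≤ C R^{(n² + 4n + 1)/((n+1)p) − (3n+1)/(2(n+1)) + ε} ‖f‖_{L^p([0,1]^{n+1})}. -/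

import Mathlib

open MeasureTheory
open scoped ENNReal

/-- The extension operator associated to the quadratic surface
`S_Q = {(ξ, Q ξ) : ξ ∈ [0,1]^d} ⊆ ℝ^{d+n}`. -/
noncomputable def extOp (d n : ℕ) (Q : (Fin d → ℝ) → Fin n → ℝ)
    (f : (Fin d → ℝ) → ℂ) (x : Fin (d + n) → ℝ) : ℂ :=
  ∫ ξ in Set.Icc (0 : Fin d → ℝ) 1,
    Complex.exp (2 * (Real.pi : ℂ) * Complex.I *
      ((((∑ i : Fin d, x (Fin.castAdd n i) * ξ i) +
        ∑ j : Fin n, x (Fin.natAdd d j) * Q ξ j : ℝ)) : ℂ)) * f ξ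

/-!
Cut the surface into slabs by the first coordinate. For two slabs at distance at least `δ`, the map
`(ξ_j, η_j) ↦ (ξ_j + η_j, ξ₁ξ_j + η₁η_j)` has Jacobian `±(ξ₁ - η₁)` (twice that when `j = 1`), of
size at least `δ`, while the last pair of coordinates contributes only the measure of the set `W` to
which they are confined. A Schur test for `∫ |E f|²` against a Gaussian weight, in which only the
smoothed mass of the pairs near a point enters, turns this into a bilinear `L²` estimate.

For `|f| ≤ 1` this yields the `L^{n+3}` estimate by an induction on scales. On slabs of width `1/R`
it follows from the `L²` estimate and the trivial sup bound. When the width grows by a factor `K`,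
the broad-narrow dichotomy multiplies the constant by `O(1)` and adds `O_K(1)`, so the total loss
over the `log_K R` scales is at most `R^ε` once `K` is large. Hölder interpolation with the `L²`
estimate gives the intermediate exponents. A general `f`, normalised in `L^p`, is split along the
levels `R^{jε} < |f| ≤ R^{(j+1)ε}`; boundedly many of them matter, because the sup bound disposes
of the part where `|f|` exceeds a large power of `R`.
-/

open scoped FourierTransform

section FinFubini

variable {E : Type*} [MeasureSpace E] [SigmaFinite (volume : Measure E)]

theorem setLIntegral_pi_insertNth {m : ℕ} (i : Fin (m + 1)) {F : (Fin (m + 1) → E) → ℝ≥0∞}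
    (hF : Measurable F) {S : Set (Fin (m + 1) → E)} {A : Set E} {B : Set (Fin m → E)}
    (hS : ∀ e q, i.insertNth e q ∈ S ↔ e ∈ A ∧ q ∈ B) :
    ∫⁻ q in S, F q = ∫⁻ e in A, ∫⁻ q in B, F (i.insertNth e q) := by
  have hvol := (volume_preserving_piFinSuccAbove (fun _ : Fin (m + 1) => E) i).symm
  have hpre : (MeasurableEquiv.piFinSuccAbove (fun _ => E) i).symm ⁻¹' S = A ×ˢ B :=
    Set.ext fun z => hS z.1 z.2
  rw [← hvol.setLIntegral_comp_preimage_emb (MeasurableEquiv.measurableEmbedding _), hpre,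
    Measure.volume_eq_prod, ← Measure.prod_restrict]
  exact lintegral_prod _ (hF.comp hvol.measurable).aemeasurable

theorem lintegral_pi_prod {m : ℕ} {g : Fin m → E → ℝ≥0∞} (hg : ∀ i, Measurable (g i)) :
    ∫⁻ q : Fin m → E, ∏ i, g i (q i) = ∏ i, ∫⁻ e, g i e := by
  induction m with
  | zero => simp [volume_pi]
  | succ m ih =>
    rw [← setLIntegral_univ,
      setLIntegral_pi_insertNth 0 (A := .univ) (B := .univ) (by fun_prop) (by simp)]
    simp only [Measure.restrict_univ, Fin.prod_univ_succ, Fin.insertNth_zero', Fin.cons_zero,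
      Fin.cons_succ]
    simp_rw [lintegral_const_mul _ (show Measurable fun q : Fin m → E => ∏ i, g i.succ (q i)
      by fun_prop), ih fun i => hg i.succ]
    rw [lintegral_mul_const _ (hg 0)]

end FinFubini

section GaussKernel

/-- The one-dimensional Gaussian of mass one concentrated at scale `1 / R`; it is the Fourier
transform of `exp (-π x² / R²)`. -/
noncomputable def gaussKernel (R u : ℝ) : ℝ≥0∞ :=
  ENNReal.ofReal (R * Real.exp (-(Real.pi * R ^ 2 * u ^ 2)))

@[fun_prop]
theorem measurable_gaussKernel (R : ℝ) : Measurable (gaussKernel R) := by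
  unfold gaussKernel; fun_prop

variable {R : ℝ}

theorem gaussKernel_le (hR : 0 < R) (u : ℝ) : gaussKernel R u ≤ ENNReal.ofReal R := by
  refine ENNReal.ofReal_le_ofReal (mul_le_of_le_one_right hR.le ?_)
  exact Real.exp_le_one_iff.mpr (neg_nonpos.mpr (by positivity))

theorem lintegral_gaussKernel (hR : 0 < R) : ∫⁻ u, gaussKernel R u = 1 := by
  have hb : 0 < Real.pi * R ^ 2 := by positivity
  have hsq : Real.pi / (Real.pi * R ^ 2) = R⁻¹ ^ 2 := by field_simp
  simp only [gaussKernel, ← neg_mul (Real.pi * R ^ 2)]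
  rw [← ofReal_integral_eq_lintegral_ofReal ((integrable_exp_neg_mul_sq hb).const_mul R)
    (.of_forall fun u => by positivity), integral_const_mul, integral_gaussian, hsq,
    Real.sqrt_sq (by positivity), mul_inv_cancel₀ hR.ne', ENNReal.ofReal_one]

theorem lintegral_gaussKernel_sub (hR : 0 < R) (a : ℝ) : ∫⁻ u, gaussKernel R (a - u) = 1 := by
  rw [lintegral_sub_left_eq_self, lintegral_gaussKernel hR]

theorem setLIntegral_gaussKernel_comp_le (hR : 0 < R) {s : Set ℝ} (hs : MeasurableSet s)
    {φ φ' : ℝ → ℝ} (hφ : ∀ x ∈ s, HasDerivWithinAt φ (φ' x) s x) (hinj : s.InjOn φ) {c : ℝ}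
    (hφ' : ∀ x ∈ s, c ≤ |φ' x|) (a : ℝ) :
    ∫⁻ y in s, gaussKernel R (a - φ y) ≤ (ENNReal.ofReal c)⁻¹ := by
  rw [ENNReal.le_inv_iff_mul_le, mul_comm, ← lintegral_const_mul' _ _ ENNReal.ofReal_ne_top]
  calc ∫⁻ y in s, ENNReal.ofReal c * gaussKernel R (a - φ y)
      ≤ ∫⁻ y in s, ENNReal.ofReal |φ' y| * gaussKernel R (a - φ y) :=
        setLIntegral_mono' hs fun y hy => by gcongr; exact hφ' y hy
    _ = ∫⁻ x in φ '' s, gaussKernel R (a - x) :=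
        (lintegral_image_eq_lintegral_abs_deriv_mul hs hφ hinj
          fun x => gaussKernel R (a - x)).symm
    _ ≤ ∫⁻ x, gaussKernel R (a - x) := setLIntegral_le_lintegral _ _
    _ = 1 := lintegral_gaussKernel_sub hR a

theorem lintegral_gaussKernel_sub_mul_le (hR : 0 < R) (a b : ℝ) :
    ∫⁻ y, gaussKernel R (a - b * y) ≤ ‖b‖ₑ⁻¹ := by
  rcases eq_or_ne b 0 with rfl | hb
  · simp
  rw [← setLIntegral_univ, Real.enorm_eq_ofReal_abs]
  exact setLIntegral_gaussKernel_comp_le hR .univ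
    (fun x _ => (hasDerivAt_const_mul b).hasDerivWithinAt)
    (mul_right_injective₀ hb).injOn (fun _ _ => le_rfl) a

theorem setLIntegral_gaussKernel_sub_sq_add_sq_le (hR : 0 < R) (b u : ℝ) {c : ℝ} (hc : 0 < c) :
    ∫⁻ y in {y | c ≤ |u - y - y|}, gaussKernel R (b - ((u - y) ^ 2 + y ^ 2)) ≤
      (ENNReal.ofReal c)⁻¹ := by
  have hderiv (s : Set ℝ) (x : ℝ) :
      HasDerivWithinAt (fun y => (u - y) ^ 2 + y ^ 2) (2 * (x - (u - x))) s x := by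
    refine HasDerivAt.hasDerivWithinAt (((((hasDerivAt_id' x).const_sub u).fun_pow 2).fun_add
      ((hasDerivAt_id' x).fun_pow 2)).congr_deriv ?_)
    norm_num
    ring
  have hbranch (s : Set ℝ) (hs : MeasurableSet s) (hsc : ∀ x ∈ s, c ≤ |u - x - x|)
      (hinj : s.InjOn fun y => (u - y) ^ 2 + y ^ 2) :
      ∫⁻ y in s, gaussKernel R (b - ((u - y) ^ 2 + y ^ 2)) ≤ (ENNReal.ofReal (2 * c))⁻¹ := by
    refine setLIntegral_gaussKernel_comp_le hR hs (fun x _ => hderiv s x) hinj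
      (fun x hx => ?_) b
    rw [abs_mul, abs_two, abs_sub_comm]
    linarith [hsc x hx]
  have hfactor (x y : ℝ) (h : (u - x) ^ 2 + x ^ 2 = (u - y) ^ 2 + y ^ 2) :
      x = y ∨ x + y = u := by
    have : (x - y) * (x + y - u) = 0 := by linarith
    exact (mul_eq_zero.mp this).imp sub_eq_zero.mp sub_eq_zero.mp
  have hleft := hbranch {y | c ≤ u - y - y} (measurableSet_le (by fun_prop) (by fun_prop))
    (fun x hx => hx.trans (le_abs_self _)) fun x (hx : c ≤ u - x - x) y (hy : c ≤ u - y - y) h =>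
      (hfactor x y h).resolve_right fun h => by linarith
  have hright := hbranch {y | c ≤ -(u - y - y)} (measurableSet_le (by fun_prop) (by fun_prop))
    (fun x hx => hx.trans (neg_le_abs _)) fun x (hx : c ≤ -(u - x - x)) y
      (hy : c ≤ -(u - y - y)) h => (hfactor x y h).resolve_right fun h => by linarith
  simp_rw [le_abs, Set.ofPred_or]
  refine (lintegral_union_le _ _ _).trans ((add_le_add hleft hright).trans_eq ?_)
  rw [ENNReal.ofReal_mul two_pos.le, ENNReal.ofReal_ofNat, ENNReal.mul_inv (by simp) (by simp),
    ← add_mul, ENNReal.inv_two_add_inv_two, one_mul]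

theorem lintegral_gaussKernel_sub_add_mul_le (hR : 0 < R) (a : ℝ) {Ψ : ℝ × ℝ → ℝ≥0∞}
    (hΨ : Measurable Ψ) {B : ℝ≥0∞} (hB : ∀ u, ∫⁻ y, Ψ (u - y, y) ≤ B) :
    ∫⁻ q : ℝ × ℝ, gaussKernel R (a - (q.1 + q.2)) * Ψ q ≤ B := by
  rw [Measure.volume_eq_prod, lintegral_prod_symm _ (by fun_prop)]
  calc ∫⁻ y, ∫⁻ x, gaussKernel R (a - (x + y)) * Ψ (x, y)
      = ∫⁻ y, ∫⁻ u, gaussKernel R (a - u) * Ψ (u - y, y) := by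
        refine lintegral_congr fun y => ?_
        rw [← lintegral_add_right_eq_self (fun u => gaussKernel R (a - u) * Ψ (u - y, y)) y]
        simp only [add_sub_cancel_right]
    _ = ∫⁻ u, gaussKernel R (a - u) * ∫⁻ y, Ψ (u - y, y) := by
        rw [lintegral_lintegral_swap (by fun_prop)]
        exact lintegral_congr fun u => lintegral_const_mul _ (by fun_prop)
    _ ≤ ∫⁻ u, gaussKernel R (a - u) * B := by gcongr with u; exact hB u
    _ = B := by
        rw [lintegral_mul_const _ (by fun_prop), lintegral_gaussKernel_sub hR, one_mul]

end GaussKernel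

section GaussWeight

variable {ι : Type*} [Fintype ι] {R : ℝ}

/-- The Gaussian weight at scale `R`, a smooth majorant (up to a constant) of the indicator function
of the ball of radius `R`. -/
noncomputable def gaussWeight (R : ℝ) (x : ι → ℝ) : ℝ :=
  Real.exp (-(Real.pi / R ^ 2) * ∑ i, x i ^ 2)

theorem integrable_gaussWeight (hR : 0 < R) : Integrable (gaussWeight R : (ι → ℝ) → ℝ) := by
  have hb : 0 < ((Real.pi / R ^ 2 : ℝ) : ℂ).re := by rw [Complex.ofReal_re]; positivity
  refine (GaussianFourier.integrable_cexp_neg_mul_sum_add hb (0 : ι → ℂ)).re.congr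
    (.of_forall fun x => ?_)
  simp only [Pi.zero_apply, zero_mul, Finset.sum_const_zero, add_zero]
  norm_cast

theorem toReal_prod_gaussKernel (hR : 0 < R) (v : ι → ℝ) :
    (∏ i, gaussKernel R (v i)).toReal =
      R ^ Fintype.card ι * Real.exp (-(Real.pi * R ^ 2) * ∑ i, v i ^ 2) := by
  simp only [ENNReal.toReal_prod, gaussKernel]
  simp_rw [ENNReal.toReal_ofReal (mul_nonneg hR.le (Real.exp_pos _).le)]
  rw [Finset.prod_mul_distrib, ← Real.exp_sum, Finset.prod_const, Finset.card_univ, Finset.mul_sum]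
  simp only [neg_mul]

theorem enorm_fourierChar (r : ℝ) : ‖(𝐞 r : ℂ)‖ₑ = 1 := by
  rw [← ofReal_norm, Circle.norm_coe, ENNReal.ofReal_one]

theorem integral_fourierChar_mul_gaussWeight (hR : 0 < R) (v : ι → ℝ) :
    ∫ x : ι → ℝ, (𝐞 (x ⬝ᵥ v) : ℂ) * gaussWeight R x =
      ((∏ i, gaussKernel R (v i)).toReal : ℂ) := by
  have hb : 0 < ((Real.pi / R ^ 2 : ℝ) : ℂ).re := by rw [Complex.ofReal_re]; positivity
  have hmass : ((Real.pi : ℂ) / (Real.pi / R ^ 2 : ℝ)) ^ ((Fintype.card ι : ℂ) / 2) =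
      (R : ℂ) ^ Fintype.card ι := by
    have hsq : Real.pi / (Real.pi / R ^ 2) = R ^ 2 := by field_simp
    have hhalf : (Fintype.card ι : ℂ) / 2 = ((Fintype.card ι / 2 : ℝ) : ℂ) := by push_cast; ring
    rw [← Complex.ofReal_div, hsq, hhalf, ← Complex.ofReal_cpow (by positivity),
      ← Real.rpow_natCast_mul hR.le, ← Complex.ofReal_pow, ← Real.rpow_natCast]
    congr 2
    push_cast
    ring
  rw [toReal_prod_gaussKernel hR, Complex.ofReal_mul, Complex.ofReal_pow, ← hmass]
  have hquad : ((-(Real.pi * R ^ 2) * ∑ i, v i ^ 2 : ℝ) : ℂ) =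
      (∑ i, (2 * Real.pi * Complex.I * v i) ^ 2) / (4 * (Real.pi / R ^ 2 : ℝ)) := by
    have : (R : ℂ) ≠ 0 := by exact_mod_cast hR.ne'
    simp only [mul_pow, Complex.I_sq, ← Finset.mul_sum]
    push_cast
    field_simp
    ring
  rw [Complex.ofReal_exp, hquad, ← GaussianFourier.integral_cexp_neg_mul_sum_add hb]
  refine integral_congr_ae (.of_forall fun x => ?_)
  simp only [gaussWeight, Real.fourierChar_apply, dotProduct, Complex.ofReal_exp]
  rw [← Complex.exp_add, add_comm]
  push_cast [Finset.mul_sum, Finset.sum_mul]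
  congr! 3 with i
  ring

/-- The loss incurred by replacing the indicator of the ball of radius `R` in `ℝ^N` by
`gaussWeight R`. The ball is that of the sup norm, where `∑ x_i² ≤ N R²`. -/
noncomputable def gaussLoss (N : ℕ) : ℝ≥0∞ := ENNReal.ofReal (Real.exp (Real.pi * N))

theorem gaussLoss_ne_top {N : ℕ} : gaussLoss N ≠ ∞ := ENNReal.ofReal_ne_top

theorem one_le_gaussLoss_mul_gaussWeight (hR : 0 < R) {x : ι → ℝ} (hx : x ∈ Metric.ball 0 R) :
    1 ≤ gaussLoss (Fintype.card ι) * ENNReal.ofReal (gaussWeight R x) := by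
  rw [gaussLoss, ← ENNReal.ofReal_mul (Real.exp_pos _).le, ENNReal.one_le_ofReal, gaussWeight,
    ← Real.exp_add]
  refine Real.one_le_exp ?_
  have hsq (i : ι) : x i ^ 2 ≤ R ^ 2 :=
    sq_le_sq.mpr (by
      rw [← Real.norm_eq_abs, abs_of_pos hR]
      exact (norm_le_pi_norm x i).trans (mem_ball_zero_iff.mp hx).le)
  have hsum : ∑ i, x i ^ 2 ≤ Fintype.card ι * R ^ 2 := by
    simpa using Finset.sum_le_card_nsmul Finset.univ _ _ fun i _ => hsq i
  have : Real.pi / R ^ 2 * ∑ i, x i ^ 2 ≤ Real.pi * Fintype.card ι := by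
    rw [div_mul_eq_mul_div, div_le_iff₀ (by positivity), mul_assoc]
    gcongr
  linarith

end GaussWeight

section OscIntegral

variable {X Y ι : Type*} [MeasurableSpace X] [MeasurableSpace Y] [Fintype ι]

/-- The oscillatory integral `x ↦ ∫ f(u) e^{2πi x·T(u)} dμ(u)`: the extension operator for the
surface parametrised by `T`, with the domain of integration encoded in the measure `μ`. -/
noncomputable def oscIntegral (μ : Measure X) (T : X → ι → ℝ) (f : X → ℂ) (x : ι → ℝ) : ℂ :=
  ∫ u, f u * 𝐞 (x ⬝ᵥ T u) ∂μ

variable {μ : Measure X} {T : X → ι → ℝ} {f g : X → ℂ}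

theorem measurable_oscIntegral [SFinite μ] (hT : Measurable T) (hf : Measurable f) :
    Measurable (oscIntegral μ T f) := by
  have : StronglyMeasurable fun z : (ι → ℝ) × X => f z.2 * (𝐞 (z.1 ⬝ᵥ T z.2) : ℂ) := by
    refine Measurable.stronglyMeasurable ?_
    unfold dotProduct
    fun_prop
  exact this.integral_prod_right.measurable

theorem norm_oscIntegral_le (x : ι → ℝ) : ‖oscIntegral μ T f x‖ ≤ ∫ u, ‖f u‖ ∂μ := by
  refine (norm_integral_le_integral_norm _).trans_eq (integral_congr_ae (.of_forall fun u => ?_))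
  simp only [norm_mul, Circle.norm_coe, mul_one]

theorem enorm_oscIntegral_le (x : ι → ℝ) : ‖oscIntegral μ T f x‖ₑ ≤ ∫⁻ u, ‖f u‖ₑ ∂μ := by
  refine (enorm_integral_le_lintegral_enorm _).trans_eq (lintegral_congr fun u => ?_)
  rw [enorm_mul, enorm_fourierChar, mul_one]

theorem integrable_mul_fourierChar {θ : X → ℝ} (hθ : Measurable θ) (hf : Integrable f μ) :
    Integrable (fun u => f u * (𝐞 (θ u) : ℂ)) μ :=
  hf.mul_bdd (c := 1) (Measurable.aestronglyMeasurable (by fun_prop))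
    (.of_forall fun u => (Circle.norm_coe _).le)

theorem oscIntegral_biUnion_finset {α : Type*} (t : Finset α) {s : α → Set X}
    (hs : ∀ i ∈ t, MeasurableSet (s i)) (hdisj : (t : Set α).PairwiseDisjoint s)
    (hT : Measurable T) (hf : ∀ i ∈ t, IntegrableOn f (s i) μ) (x : ι → ℝ) :
    oscIntegral (μ.restrict (⋃ i ∈ t, s i)) T f x = ∑ i ∈ t, oscIntegral (μ.restrict (s i)) T f x :=
  integral_biUnion_finset t hs hdisj fun i hi =>
    integrable_mul_fourierChar (by unfold dotProduct; fun_prop) (hf i hi)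

theorem oscIntegral_restrict_of_support_subset {s : Set X} (hf : Function.support f ⊆ s) :
    oscIntegral (μ.restrict s) T f = oscIntegral μ T f :=
  funext fun _ => setIntegral_eq_integral_of_forall_compl_eq_zero fun _ hu => by
    rw [Function.notMem_support.mp fun hfu => hu (hf hfu), zero_mul]

theorem oscIntegral_const_mul (a : ℂ) (x : ι → ℝ) :
    oscIntegral μ T (fun u => a * f u) x = a * oscIntegral μ T f x := by
  simp only [oscIntegral, mul_assoc, integral_const_mul]

theorem oscIntegral_prod {ν : Measure Y} [SFinite μ] [SFinite ν] {S : Y → ι → ℝ} {h : Y → ℂ}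
    (x : ι → ℝ) :
    oscIntegral (μ.prod ν) (fun z => T z.1 + S z.2) (fun z => f z.1 * h z.2) x =
      oscIntegral μ T f x * oscIntegral ν S h x := by
  rw [oscIntegral, oscIntegral, oscIntegral, ← integral_prod_mul]
  congr 1 with z
  rw [dotProduct_add, AddChar.map_add_eq_mul, Circle.coe_mul]
  ring

theorem norm_sq_oscIntegral [SFinite μ] (x : ι → ℝ) :
    ((‖oscIntegral μ T f x‖ ^ 2 : ℝ) : ℂ) =
      oscIntegral (μ.prod μ) (fun z => T z.1 - T z.2)
        (fun z => f z.1 * starRingEnd ℂ (f z.2)) x := by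
  rw [← Complex.normSq_eq_norm_sq, ← Complex.mul_conj, oscIntegral, ← integral_conj,
    ← integral_prod_mul, oscIntegral]
  congr 1 with z
  rw [dotProduct_sub, sub_eq_add_neg, AddChar.map_add_eq_mul, AddChar.map_neg_eq_inv,
    Circle.coe_mul, Circle.coe_inv_eq_conj, map_mul]
  ring

theorem integral_oscIntegral_mul_gaussWeight [SFinite μ] {R : ℝ} (hR : 0 < R) (hT : Measurable T)
    (hf : Integrable f μ) :
    ∫ x, oscIntegral μ T f x * gaussWeight R x =
      ∫ u, f u * (∏ i, gaussKernel R (T u i)).toReal ∂μ := by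
  have hint : Integrable (fun z : (ι → ℝ) × X =>
      f z.2 * (𝐞 (z.1 ⬝ᵥ T z.2) : ℂ) * gaussWeight R z.1) (volume.prod μ) := by
    refine (integrable_mul_fourierChar (θ := fun z : (ι → ℝ) × X => z.1 ⬝ᵥ T z.2) ?_
      ((integrable_gaussWeight hR).ofReal.mul_prod hf)).congr (.of_forall fun z => ?_)
    · unfold dotProduct
      fun_prop
    · dsimp only [RCLike.ofReal_eq_complex_ofReal]
      ring
  simp only [oscIntegral, ← integral_mul_const]
  rw [integral_integral_swap hint]
  refine integral_congr_ae (.of_forall fun u => ?_)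
  simp only [mul_assoc, integral_const_mul, integral_fourierChar_mul_gaussWeight hR]

theorem integrable_norm_sq_oscIntegral_mul_gaussWeight [SFinite μ] {R : ℝ} (hR : 0 < R)
    (hT : Measurable T) (hf : Measurable f) :
    Integrable fun x => ‖oscIntegral μ T f x‖ ^ 2 * gaussWeight R x := by
  refine (integrable_gaussWeight hR).bdd_mul (c := (∫ u, ‖f u‖ ∂μ) ^ 2)
    ((measurable_oscIntegral hT hf).norm.pow_const 2).aestronglyMeasurable (.of_forall fun x => ?_)
  rw [Real.norm_of_nonneg (by positivity)]
  gcongr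
  exact norm_oscIntegral_le x

theorem lintegral_enorm_sq_oscIntegral_mul_gaussWeight_le [SFinite μ] {R : ℝ} (hR : 0 < R)
    (hT : Measurable T) (hf : Measurable f) (hfint : Integrable f μ) :
    ∫⁻ x, ‖oscIntegral μ T f x‖ₑ ^ 2 * ENNReal.ofReal (gaussWeight R x) ≤
      ∫⁻ u, ‖f u‖ₑ * ∫⁻ v, ‖f v‖ₑ * ∏ i, gaussKernel R (T u i - T v i) ∂μ ∂μ := by
  have hff : Integrable (fun z : X × X => f z.1 * starRingEnd ℂ (f z.2)) (μ.prod μ) :=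
    hfint.mul_prod (Complex.conjCLE.integrable_comp_iff.mpr hfint)
  calc ∫⁻ x, ‖oscIntegral μ T f x‖ₑ ^ 2 * ENNReal.ofReal (gaussWeight R x)
      = ∫⁻ x, ENNReal.ofReal (‖oscIntegral μ T f x‖ ^ 2 * gaussWeight R x) := by
        refine lintegral_congr fun x => ?_
        rw [ENNReal.ofReal_mul (by positivity), ENNReal.ofReal_pow (norm_nonneg _), ofReal_norm]
    _ = ‖∫ x, ((‖oscIntegral μ T f x‖ ^ 2 * gaussWeight R x : ℝ) : ℂ)‖ₑ := by
        have hnn (x : ι → ℝ) : 0 ≤ ‖oscIntegral μ T f x‖ ^ 2 * gaussWeight R x :=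
          mul_nonneg (by positivity) (Real.exp_pos _).le
        rw [integral_complex_ofReal, ← ofReal_norm, Complex.norm_real,
          Real.norm_of_nonneg (integral_nonneg hnn),
          ofReal_integral_eq_lintegral_ofReal
            (integrable_norm_sq_oscIntegral_mul_gaussWeight hR hT hf) (.of_forall hnn)]
    _ = ‖∫ z, f z.1 * starRingEnd ℂ (f z.2) *
          (∏ i, gaussKernel R (T z.1 i - T z.2 i)).toReal ∂μ.prod μ‖ₑ := by
        simp only [Complex.ofReal_mul, norm_sq_oscIntegral]
        rw [integral_oscIntegral_mul_gaussWeight hR (by fun_prop) hff]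
        rfl
    _ ≤ ∫⁻ z, ‖f z.1‖ₑ * (‖f z.2‖ₑ * ∏ i, gaussKernel R (T z.1 i - T z.2 i)) ∂μ.prod μ := by
        refine (enorm_integral_le_lintegral_enorm _).trans_eq (lintegral_congr fun z => ?_)
        have hk : ∏ i, gaussKernel R (T z.1 i - T z.2 i) ≠ ∞ :=
          ENNReal.prod_ne_top fun i _ => ENNReal.ofReal_ne_top
        rw [enorm_mul, enorm_mul, mul_assoc, ← ofReal_norm (starRingEnd ℂ _), RCLike.norm_conj,
          ofReal_norm, ← ofReal_norm (Complex.ofReal _), Complex.norm_of_nonneg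
          ENNReal.toReal_nonneg, ENNReal.ofReal_toReal hk]
    _ = ∫⁻ u, ‖f u‖ₑ * ∫⁻ v, ‖f v‖ₑ * ∏ i, gaussKernel R (T u i - T v i) ∂μ ∂μ := by
        rw [lintegral_prod _ (by fun_prop)]
        exact lintegral_congr fun u => lintegral_const_mul' ‖f u‖ₑ _ enorm_ne_top

theorem setLIntegral_ball_enorm_sq_oscIntegral_le [SFinite μ] {R : ℝ} (hR : 0 < R)
    (hT : Measurable T) (hf : Measurable f) (hfint : Integrable f μ) (hf1 : ∀ u, ‖f u‖ₑ ≤ 1)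
    {A : ℝ≥0∞} (hA : ∀ v : ι → ℝ, ∫⁻ u, ∏ i, gaussKernel R (v i - T u i) ∂μ ≤ A) :
    ∫⁻ x in Metric.ball 0 R, ‖oscIntegral μ T f x‖ₑ ^ 2 ≤
      gaussLoss (Fintype.card ι) * A * ∫⁻ u, ‖f u‖ₑ ∂μ := by
  set e := gaussLoss (Fintype.card ι)
  calc ∫⁻ x in Metric.ball 0 R, ‖oscIntegral μ T f x‖ₑ ^ 2
      ≤ ∫⁻ x in Metric.ball 0 R,
          e * (‖oscIntegral μ T f x‖ₑ ^ 2 * ENNReal.ofReal (gaussWeight R x)) := by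
        refine setLIntegral_mono' measurableSet_ball fun x hx => ?_
        rw [mul_left_comm]
        exact le_mul_of_one_le_right' (one_le_gaussLoss_mul_gaussWeight hR hx)
    _ ≤ e * ∫⁻ x, ‖oscIntegral μ T f x‖ₑ ^ 2 * ENNReal.ofReal (gaussWeight R x) := by
        rw [lintegral_const_mul' e _ ENNReal.ofReal_ne_top]
        exact mul_le_mul_right (setLIntegral_le_lintegral _ _) _
    _ ≤ e * ∫⁻ u, ‖f u‖ₑ * A ∂μ := by
        gcongr
        refine (lintegral_enorm_sq_oscIntegral_mul_gaussWeight_le hR hT hf hfint).trans ?_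
        gcongr with u
        refine (lintegral_mono fun v => ?_).trans (hA (T u))
        exact mul_le_of_le_one_left' (hf1 v)
    _ = e * A * ∫⁻ u, ‖f u‖ₑ ∂μ := by
        rw [lintegral_mul_const _ (by fun_prop), mul_comm _ A, mul_assoc]

end OscIntegral

section PairKernel

variable {R : ℝ}

theorem lintegral_pair_gaussKernel_mul_linear_le (hR : 0 < R) (a b s t : ℝ) :
    ∫⁻ q : ℝ × ℝ, gaussKernel R (a - (q.1 + q.2)) * gaussKernel R (b - (s * q.1 + t * q.2)) ≤
      ‖s - t‖ₑ⁻¹ := by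
  refine lintegral_gaussKernel_sub_add_mul_le hR a
    (Ψ := fun q => gaussKernel R (b - (s * q.1 + t * q.2))) (by fun_prop) fun u => ?_
  have hlin (y : ℝ) : b - (s * (u - y) + t * y) = b - s * u - (t - s) * y := by ring
  simp only [hlin]
  rw [enorm_sub_rev]
  exact lintegral_gaussKernel_sub_mul_le hR _ _

theorem setLIntegral_pair_gaussKernel_mul_sq_le (hR : 0 < R) (a b : ℝ) {c : ℝ} (hc : 0 < c) :
    ∫⁻ q in {q : ℝ × ℝ | c ≤ |q.1 - q.2|},
      gaussKernel R (a - (q.1 + q.2)) * gaussKernel R (b - (q.1 ^ 2 + q.2 ^ 2)) ≤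
      (ENNReal.ofReal c)⁻¹ := by
  have hS : MeasurableSet {q : ℝ × ℝ | c ≤ |q.1 - q.2|} :=
    measurableSet_le (by fun_prop) (by fun_prop)
  rw [← lintegral_indicator hS]
  refine (lintegral_congr fun q => Set.indicator_mul_right _ (fun q : ℝ × ℝ =>
    gaussKernel R (a - (q.1 + q.2))) _).trans_le (lintegral_gaussKernel_sub_add_mul_le hR a
      (Measurable.indicator (by fun_prop) hS) fun u => ?_)
  refine le_trans (le_of_eq ?_) (setLIntegral_gaussKernel_sub_sq_add_sq_le hR b u hc)
  rw [← lintegral_indicator (measurableSet_le (by fun_prop) (by fun_prop))]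
  rfl

theorem setLIntegral_pair_gaussKernel_le (hR : 0 < R) (a : ℝ) {W : Set ℝ}
    (hW : MeasurableSet W) :
    ∫⁻ q in {q : ℝ × ℝ | q.1 ∈ W}, gaussKernel R (a - (q.1 + q.2)) ≤ volume W := by
  have hS : MeasurableSet {q : ℝ × ℝ | q.1 ∈ W} := measurable_fst hW
  rw [← lintegral_indicator hS]
  have hmul (q : ℝ × ℝ) :
      {q : ℝ × ℝ | q.1 ∈ W}.indicator (fun q => gaussKernel R (a - (q.1 + q.2))) q =
        gaussKernel R (a - (q.1 + q.2)) * {q : ℝ × ℝ | q.1 ∈ W}.indicator 1 q := by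
    by_cases hq : q.1 ∈ W <;> simp [hq]
  refine (lintegral_congr hmul).trans_le (lintegral_gaussKernel_sub_add_mul_le hR a
    (measurable_one.indicator hS) fun u => ?_)
  calc ∫⁻ y, {q : ℝ × ℝ | q.1 ∈ W}.indicator 1 (u - y, y)
      = ∫⁻ y, W.indicator 1 (u - y) := rfl
    _ = ∫⁻ y, W.indicator 1 y := lintegral_sub_left_eq_self _ _
    _ ≤ volume W := (lintegral_indicator_one hW).le

theorem setLIntegral_pairs_prod_gaussKernel_le (hR : 0 < R) {m : ℕ} (a b : Fin (m + 1) → ℝ)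
    {c : ℝ} (hc : 0 < c) :
    ∫⁻ q in {q : Fin (m + 1) → ℝ × ℝ | c ≤ |(q 0).1 - (q 0).2|},
      ∏ j, (gaussKernel R (a j - ((q j).1 + (q j).2)) *
        gaussKernel R (b j - ((q 0).1 * (q j).1 + (q 0).2 * (q j).2))) ≤
      (ENNReal.ofReal c)⁻¹ ^ (m + 1) := by
  rw [setLIntegral_pi_insertNth 0 (A := {r | c ≤ |r.1 - r.2|}) (B := .univ) (by fun_prop)
    (by simp)]
  calc _ = ∫⁻ r in {r : ℝ × ℝ | c ≤ |r.1 - r.2|},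
        gaussKernel R (a 0 - (r.1 + r.2)) * gaussKernel R (b 0 - (r.1 ^ 2 + r.2 ^ 2)) *
          ∫⁻ q : Fin m → ℝ × ℝ, ∏ j, (gaussKernel R (a j.succ - ((q j).1 + (q j).2)) *
            gaussKernel R (b j.succ - (r.1 * (q j).1 + r.2 * (q j).2))) := by
        refine lintegral_congr fun r => ?_
        simp only [Measure.restrict_univ, Fin.insertNth_zero', Fin.cons_zero, Fin.prod_univ_succ,
          Fin.cons_succ, ← sq]
        rw [lintegral_const_mul _ (by fun_prop)]
    _ ≤ ∫⁻ r in {r : ℝ × ℝ | c ≤ |r.1 - r.2|},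
        gaussKernel R (a 0 - (r.1 + r.2)) * gaussKernel R (b 0 - (r.1 ^ 2 + r.2 ^ 2)) *
          (ENNReal.ofReal c)⁻¹ ^ m := by
        refine setLIntegral_mono' (measurableSet_le (by fun_prop) (by fun_prop)) fun r hr => ?_
        gcongr
        rw [lintegral_pi_prod (g := fun j (e : ℝ × ℝ) => gaussKernel R (a j.succ - (e.1 + e.2)) *
          gaussKernel R (b j.succ - (r.1 * e.1 + r.2 * e.2))) fun j => by fun_prop]
        refine (Finset.prod_le_pow_card _ _ (ENNReal.ofReal c)⁻¹ fun j _ =>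
          (lintegral_pair_gaussKernel_mul_linear_le hR _ _ r.1 r.2).trans ?_).trans_eq (by simp)
        rw [Real.enorm_eq_ofReal_abs]
        gcongr
        exact hr
    _ ≤ (ENNReal.ofReal c)⁻¹ ^ (m + 1) := by
        rw [lintegral_mul_const _ (by fun_prop), pow_succ']
        gcongr
        exact setLIntegral_pair_gaussKernel_mul_sq_le hR _ _ hc

end PairKernel

section QuadraticSurface

variable {d n : ℕ} {R : ℝ}

/-- The parametrisation `ξ ↦ (ξ, Q ξ)` of the surface `S_Q`. -/
def graphMap (Q : (Fin d → ℝ) → Fin n → ℝ) (ξ : Fin d → ℝ) : Fin (d + n) → ℝ :=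
  Fin.append ξ (Q ξ)

@[fun_prop]
theorem measurable_graphMap {Q : (Fin d → ℝ) → Fin n → ℝ} (hQ : Measurable Q) :
    Measurable (graphMap Q) := by
  refine measurable_pi_lambda _ fun i => ?_
  refine Fin.addCases (fun i => ?_) (fun j => ?_) i <;>
    simp only [graphMap, Fin.append_left, Fin.append_right] <;> fun_prop

theorem extOp_eq_oscIntegral (Q : (Fin d → ℝ) → Fin n → ℝ) (f : (Fin d → ℝ) → ℂ) :
    extOp d n Q f = oscIntegral (volume.restrict (Set.Icc 0 1)) (graphMap Q) f := by
  ext x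
  refine integral_congr_ae (.of_forall fun ξ => ?_)
  simp only [graphMap, dotProduct, Fin.sum_univ_add, Fin.append_left, Fin.append_right,
    Real.fourierChar_apply, mul_comm (f ξ)]
  congr 2
  push_cast
  ring

theorem integrable_of_enorm_le_one {X : Type*} [MeasurableSpace X] {μ : Measure X}
    [IsFiniteMeasure μ] {f : X → ℂ} (hf : Measurable f) (hf1 : ∀ u, ‖f u‖ₑ ≤ 1) :
    Integrable f μ :=
  .of_bound hf.aestronglyMeasurable 1 (.of_forall fun u => by
    simpa [← ofReal_norm] using hf1 u)

theorem setLIntegral_ball_enorm_sq_graphMap_le (hR : 0 < R) {Q : (Fin d → ℝ) → Fin n → ℝ}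
    (hQ : Measurable Q) {s : Set (Fin d → ℝ)} (hs : volume s ≠ ∞) {f : (Fin d → ℝ) → ℂ}
    (hf : Measurable f) (hf1 : ∀ ξ, ‖f ξ‖ₑ ≤ 1) :
    ∫⁻ x in Metric.ball 0 R, ‖oscIntegral (volume.restrict s) (graphMap Q) f x‖ₑ ^ 2 ≤
      gaussLoss (d + n) * ENNReal.ofReal R ^ n *
        ∫⁻ ξ in s, ‖f ξ‖ₑ := by
  have : IsFiniteMeasure (volume.restrict s) := ⟨by simpa using hs.lt_top⟩
  refine (setLIntegral_ball_enorm_sq_oscIntegral_le hR (measurable_graphMap hQ) hf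
    (integrable_of_enorm_le_one hf hf1) hf1 (A := ENNReal.ofReal R ^ n) fun v => ?_).trans_eq
      (by simp only [Fintype.card_fin])
  calc ∫⁻ ξ in s, ∏ i, gaussKernel R (v i - graphMap Q ξ i)
      ≤ ∫⁻ ξ : Fin d → ℝ,
          (∏ i, gaussKernel R (v (Fin.castAdd n i) - ξ i)) * ENNReal.ofReal R ^ n := by
        refine (setLIntegral_le_lintegral _ _).trans (lintegral_mono fun ξ => ?_)
        simp only [Fin.prod_univ_add, graphMap, Fin.append_left, Fin.append_right]
        gcongr
        exact (Finset.prod_le_pow_card _ _ (ENNReal.ofReal R) fun j _ =>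
          gaussKernel_le hR _).trans_eq (by simp)
    _ = ENNReal.ofReal R ^ n := by
        rw [lintegral_mul_const _ (by fun_prop), lintegral_pi_prod
          (g := fun i e => gaussKernel R (v (Fin.castAdd n i) - e)) fun i => by fun_prop]
        simp only [lintegral_gaussKernel_sub hR, Finset.prod_const_one, one_mul]

/-- The forms `ξ₁ ξ_j + φ_j(ξ_{n+1})`, `1 ≤ j ≤ n`, with arbitrary functions `φ_j` of the last
variable; in `statement18`, `φ_n(t) = t²` and the other `φ_j` vanish. -/
def coupledForms (φ : Fin n → ℝ → ℝ) (ξ : Fin (n + 1) → ℝ) (j : Fin n) : ℝ :=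
  ξ 0 * ξ j.castSucc + φ j (ξ (Fin.last n))

@[fun_prop]
theorem measurable_coupledForms {φ : Fin n → ℝ → ℝ} (hφ : ∀ j, Measurable (φ j)) :
    Measurable (coupledForms φ) := by
  unfold coupledForms
  fun_prop

theorem prod_gaussKernel_coupledForms (φ : Fin n → ℝ → ℝ) (v : Fin (n + 1 + n) → ℝ)
    (q : Fin (n + 1) → ℝ × ℝ) :
    ∏ i, gaussKernel R (v i - (graphMap (coupledForms φ) (fun i => (q i).1) +
        graphMap (coupledForms φ) (fun i => (q i).2)) i) =
      gaussKernel R (v (Fin.castAdd _ (Fin.last _)) - ((q (Fin.last _)).1 + (q (Fin.last _)).2)) *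
        ∏ j : Fin n,
          (gaussKernel R (v (Fin.castAdd _ j.castSucc) - ((q j.castSucc).1 + (q j.castSucc).2)) *
            gaussKernel R (v (Fin.natAdd _ j) -
              (φ j (q (Fin.last _)).1 + φ j (q (Fin.last _)).2) -
                ((q 0).1 * (q j.castSucc).1 + (q 0).2 * (q j.castSucc).2))) := by
  rw [Fin.prod_univ_add, Fin.prod_univ_castSucc, Finset.prod_mul_distrib]
  simp only [graphMap, Pi.add_apply, Fin.append_left, Fin.append_right, coupledForms]
  rw [mul_comm (∏ i : Fin n, _) (gaussKernel R _), mul_assoc]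
  congr! 4 with j
  ring

theorem setLIntegral_pairs_prod_gaussKernel_coupledForms_le (hR : 0 < R) {φ : Fin n → ℝ → ℝ}
    (hφ : ∀ j, Measurable (φ j)) {W : Set ℝ} (hW : MeasurableSet W)
    {c : ℝ} (hc : 0 < c) (v : Fin (n + 1 + n) → ℝ) :
    ∫⁻ q in {q : Fin (n + 1) → ℝ × ℝ | c ≤ |(q 0).1 - (q 0).2| ∧ (q (Fin.last _)).1 ∈ W},
      ∏ i, gaussKernel R (v i - (graphMap (coupledForms φ) (fun i => (q i).1) +
        graphMap (coupledForms φ) (fun i => (q i).2)) i) ≤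
      volume W * (ENNReal.ofReal c)⁻¹ ^ n := by
  simp only [prod_gaussKernel_coupledForms]
  rcases n with _ | m
  · rw [setLIntegral_pi_insertNth 0 (A := {r | c ≤ |r.1 - r.2| ∧ r.1 ∈ W}) (B := .univ)
      (by fun_prop) (by simp)]
    refine (lintegral_mono_set (t := {r : ℝ × ℝ | r.1 ∈ W}) fun r hr => hr.2).trans ?_
    simpa [volume_pi] using setLIntegral_pair_gaussKernel_le hR (v 0) hW
  have hsnoc_zero (q : Fin (m + 1) → ℝ × ℝ) (r : ℝ × ℝ) :
      (Fin.snoc q r : Fin (m + 1 + 1) → ℝ × ℝ) 0 = q 0 := Fin.snoc_castSucc (i := 0) ..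
  rw [setLIntegral_pi_insertNth (Fin.last _) (A := {r | r.1 ∈ W})
    (B := {q | c ≤ |(q 0).1 - (q 0).2|}) (by fun_prop)
    (by simp [hsnoc_zero, and_comm])]
  calc _ = ∫⁻ r in {r : ℝ × ℝ | r.1 ∈ W},
        gaussKernel R (v (Fin.castAdd _ (Fin.last _)) - (r.1 + r.2)) *
          ∫⁻ q in {q : Fin (m + 1) → ℝ × ℝ | c ≤ |(q 0).1 - (q 0).2|}, ∏ j,
            (gaussKernel R (v (Fin.castAdd _ j.castSucc) - ((q j).1 + (q j).2)) *
              gaussKernel R (v (Fin.natAdd _ j) - (φ j r.1 + φ j r.2) -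
                ((q 0).1 * (q j).1 + (q 0).2 * (q j).2))) := by
        refine lintegral_congr fun r => ?_
        rw [← lintegral_const_mul _ (by fun_prop)]
        simp only [Fin.insertNth_last', Fin.snoc_last, Fin.snoc_castSucc, hsnoc_zero]
    _ ≤ ∫⁻ r in {r : ℝ × ℝ | r.1 ∈ W},
        gaussKernel R (v (Fin.castAdd _ (Fin.last _)) - (r.1 + r.2)) *
          (ENNReal.ofReal c)⁻¹ ^ (m + 1) := by
        gcongr with r
        exact setLIntegral_pairs_prod_gaussKernel_le hR _ _ hc
    _ ≤ volume W * (ENNReal.ofReal c)⁻¹ ^ (m + 1) := by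
        rw [lintegral_mul_const _ (by fun_prop)]
        gcongr
        exact setLIntegral_pair_gaussKernel_le hR _ hW

theorem setLIntegral_ball_enorm_sq_mul_coupledForms_le (hR : 0 < R) {φ : Fin n → ℝ → ℝ}
    (hφ : ∀ j, Measurable (φ j)) {W : Set ℝ} (hW : MeasurableSet W) {c : ℝ} (hc : 0 < c)
    {s t : Set (Fin (n + 1) → ℝ)} (hs : volume s ≠ ∞) (ht : volume t ≠ ∞)
    (hsW : ∀ ξ ∈ s, ξ (Fin.last n) ∈ W) (hst : ∀ ξ ∈ s, ∀ η ∈ t, c ≤ |ξ 0 - η 0|)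
    {f g : (Fin (n + 1) → ℝ) → ℂ} (hf : Measurable f) (hf1 : ∀ ξ, ‖f ξ‖ₑ ≤ 1)
    (hg : Measurable g) (hg1 : ∀ ξ, ‖g ξ‖ₑ ≤ 1) :
    ∫⁻ x in Metric.ball 0 R,
      (‖oscIntegral (volume.restrict s) (graphMap (coupledForms φ)) f x‖ₑ *
        ‖oscIntegral (volume.restrict t) (graphMap (coupledForms φ)) g x‖ₑ) ^ 2 ≤
      gaussLoss (n + 1 + n) *
        (volume W * (ENNReal.ofReal c)⁻¹ ^ n) * ((∫⁻ ξ in s, ‖f ξ‖ₑ) * ∫⁻ η in t, ‖g η‖ₑ) := by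
  have : IsFiniteMeasure (volume.restrict s) := ⟨by simpa using hs.lt_top⟩
  have : IsFiniteMeasure (volume.restrict t) := ⟨by simpa using ht.lt_top⟩
  have hfg1 (z : (Fin (n + 1) → ℝ) × (Fin (n + 1) → ℝ)) : ‖f z.1 * g z.2‖ₑ ≤ 1 := by
    rw [enorm_mul]
    exact mul_le_one' (hf1 _) (hg1 _)
  simp only [← enorm_mul, ← oscIntegral_prod]
  refine (setLIntegral_ball_enorm_sq_oscIntegral_le hR (by fun_prop) (by fun_prop)
    (integrable_of_enorm_le_one (by fun_prop) hfg1) hfg1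
    (A := volume W * (ENNReal.ofReal c)⁻¹ ^ n) fun v => ?_).trans_eq ?_
  · refine le_trans ?_ (setLIntegral_pairs_prod_gaussKernel_coupledForms_le hR hφ hW hc v)
    rw [Measure.prod_restrict, ← Measure.volume_eq_prod,
      ← (volume_measurePreserving_arrowProdEquivProdArrow ℝ ℝ _).setLIntegral_comp_preimage_emb
        (MeasurableEquiv.measurableEmbedding _)]
    exact lintegral_mono_set fun q hq => ⟨hst _ hq.1 _ hq.2, hsW _ hq.1⟩
  · simp only [Fintype.card_fin, enorm_mul]
    rw [lintegral_prod_mul hf.enorm.aemeasurable hg.enorm.aemeasurable]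

end QuadraticSurface

section BroadNarrow

open scoped Finset

/-- The pairs of non-adjacent indices below `K`. -/
def separatedPairs (K : ℕ) : Finset (ℕ × ℕ) :=
  {p ∈ Finset.range K ×ˢ Finset.range K | p.1 + 2 ≤ p.2 ∨ p.2 + 2 ≤ p.1}

theorem sum_le_four_mul_of_separated_le {K : ℕ} {a : ℕ → ℝ≥0∞} {M : ℝ≥0∞} {i : ℕ}
    (hM : ∀ j ∈ Finset.range K, a j ≤ M)
    (hsep : ∀ j ∈ Finset.range K, i + 2 ≤ j ∨ j + 2 ≤ i → K * a j ≤ M) :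
    ∑ j ∈ Finset.range K, a j ≤ 4 * M := by
  rcases eq_or_ne K 0 with rfl | hK
  · simp
  have hfar : ∑ j ∈ Finset.range K with i + 2 ≤ j ∨ j + 2 ≤ i, a j ≤ M := by
    have hK' : (K : ℝ≥0∞) ≠ 0 := by exact_mod_cast hK
    rw [← ENNReal.mul_le_mul_iff_right hK' (ENNReal.natCast_ne_top K), Finset.mul_sum]
    refine (Finset.sum_le_card_nsmul _ _ M fun j hj => ?_).trans ?_
    · exact hsep j (Finset.mem_filter.mp hj).1 (Finset.mem_filter.mp hj).2
    · rw [nsmul_eq_mul]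
      gcongr
      exact (Finset.card_filter_le _ _).trans_eq (Finset.card_range K)
  have hnear : ∑ j ∈ Finset.range K with ¬ (i + 2 ≤ j ∨ j + 2 ≤ i), a j ≤ 3 * M := by
    have hcard : #{j ∈ Finset.range K | ¬ (i + 2 ≤ j ∨ j + 2 ≤ i)} ≤ 3 := by
      refine (Finset.card_le_card (t := Finset.Icc (i - 1) (i + 1)) fun j hj => ?_).trans ?_
      · have := (Finset.mem_filter.mp hj).2
        rw [Finset.mem_Icc]
        omega
      · rw [Nat.card_Icc]
        omega
    refine (Finset.sum_le_card_nsmul _ _ M fun j hj => hM j (Finset.mem_filter.mp hj).1).trans ?_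
    rw [nsmul_eq_mul]
    gcongr
    exact_mod_cast hcard
  rw [← Finset.sum_filter_add_sum_filter_not _ fun j => i + 2 ≤ j ∨ j + 2 ≤ i]
  exact (add_le_add hfar hnear).trans_eq (by ring)

theorem sum_pow_le_sum_pow_add_sum_separatedPairs (k K : ℕ) {a : ℕ → ℝ≥0∞} {b : ℝ≥0∞}
    (hb : ∀ j ∈ Finset.range K, a j ≤ b) :
    (∑ j ∈ Finset.range K, a j) ^ (k + 4) ≤
      4 ^ (k + 4) * ∑ j ∈ Finset.range K, a j ^ (k + 4) +
        K ^ (k + 6) * b ^ k * ∑ p ∈ separatedPairs K, (a p.1 * a p.2) ^ 2 := by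
  rcases K.eq_zero_or_pos with rfl | hK
  · simp
  obtain ⟨i, hi, hmax⟩ := (Finset.range K).exists_max_image a ⟨0, Finset.mem_range.mpr hK⟩
  by_cases hnarrow : ∀ j ∈ Finset.range K, i + 2 ≤ j ∨ j + 2 ≤ i → K * a j ≤ a i
  · refine le_add_right ?_
    calc (∑ j ∈ Finset.range K, a j) ^ (k + 4) ≤ (4 * a i) ^ (k + 4) := by
          gcongr
          exact sum_le_four_mul_of_separated_le hmax hnarrow
      _ ≤ 4 ^ (k + 4) * ∑ j ∈ Finset.range K, a j ^ (k + 4) := by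
          rw [mul_pow]
          gcongr
          exact Finset.single_le_sum_of_canonicallyOrdered (f := fun j => a j ^ (k + 4)) hi
  · push Not at hnarrow
    obtain ⟨j, hj, hij, hlt⟩ := hnarrow
    refine le_add_left ?_
    calc (∑ j ∈ Finset.range K, a j) ^ (k + 4) ≤ (K * a i) ^ (k + 4) := by
          gcongr
          exact (Finset.sum_le_card_nsmul _ _ _ hmax).trans_eq
            (by rw [Finset.card_range, nsmul_eq_mul])
      _ = K ^ (k + 4) * a i ^ k * (a i * a i) ^ 2 := by ring
      _ ≤ K ^ (k + 4) * b ^ k * (a i * (K * a j)) ^ 2 := by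
          gcongr
          exact hb i hi
      _ = K ^ (k + 6) * b ^ k * (a i * a j) ^ 2 := by ring
      _ ≤ _ := by
          gcongr
          exact Finset.single_le_sum_of_canonicallyOrdered
            (f := fun p : ℕ × ℕ => (a p.1 * a p.2) ^ 2)
            (Finset.mem_filter.mpr ⟨Finset.mk_mem_product hi hj, hij⟩)

end BroadNarrow

section CubeSlab

variable {n : ℕ} {I W : Set ℝ}

/-- The part of the unit cube with first coordinate in `I` and last coordinate in `W`. -/
def cubeSlab (n : ℕ) (I W : Set ℝ) : Set (Fin (n + 1) → ℝ) :=
  Set.Icc 0 1 ∩ {ξ | ξ 0 ∈ I ∧ ξ (Fin.last n) ∈ W}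

theorem measurableSet_cubeSlab (hI : MeasurableSet I) (hW : MeasurableSet W) :
    MeasurableSet (cubeSlab n I W) :=
  measurableSet_Icc.inter ((measurable_pi_apply 0 hI).inter (measurable_pi_apply _ hW))

theorem volume_cubeSlab_ne_top : volume (cubeSlab n I W) ≠ ∞ :=
  measure_ne_top_of_subset Set.inter_subset_left isCompact_Icc.measure_ne_top

theorem volume_cubeSlab_le {k : ℕ} (I W : Set ℝ) :
    volume (cubeSlab (k + 1) I W) ≤ volume I * volume W := by
  let J : Fin (k + 2) → Set ℝ := Fin.cons I (Fin.snoc (fun _ : Fin k => Set.Icc 0 1) W)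
  calc volume (cubeSlab (k + 1) I W) ≤ volume (Set.univ.pi J) := by
        refine measure_mono fun ξ ⟨⟨hξ0, hξ1⟩, hI, hW⟩ => ?_
        refine Set.mem_univ_pi.mpr (Fin.cases hI (Fin.lastCases ?_ fun i => ?_))
        · simpa [J] using hW
        · simpa [J] using ⟨hξ0 _, hξ1 _⟩
    _ = volume I * volume W := by
        rw [volume_pi_pi, Fin.prod_univ_succ, Fin.prod_univ_castSucc]
        simp [J]

theorem monotone_add_mul_natCast {δ : ℝ} (hδ : 0 ≤ δ) (a : ℝ) :
    Monotone fun i : ℕ => a + i * δ := fun i j hij => by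
  dsimp only
  gcongr

theorem cubeSlab_Ioc_eq_biUnion {δ : ℝ} (hδ : 0 ≤ δ) (a : ℝ) (K : ℕ) (W : Set ℝ) :
    cubeSlab n (Set.Ioc a (a + K * δ)) W =
      ⋃ i ∈ Finset.range K, cubeSlab n (Set.Ioc (a + i * δ) (a + i * δ + δ)) W := by
  have hIoc := (monotone_add_mul_natCast hδ a).biUnion_Ico_Ioc_map_succ 0 K
  simp only [Nat.cast_zero, zero_mul, add_zero, Order.succ_eq_add_one, Nat.cast_add_one,
    add_one_mul, ← add_assoc] at hIoc
  ext ξ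
  simp only [cubeSlab, ← hIoc, Set.mem_inter_iff, Set.mem_ofPred_eq, Set.mem_iUnion,
    Finset.mem_range, Set.mem_Ico, zero_le, true_and, exists_prop]
  tauto

theorem pairwiseDisjoint_cubeSlab_Ioc {δ : ℝ} (hδ : 0 ≤ δ) (a : ℝ) (W : Set ℝ) (s : Set ℕ) :
    s.PairwiseDisjoint fun i : ℕ =>
      cubeSlab n (Set.Ioc (a + i * δ) (a + i * δ + δ)) W := by
  intro i _ j _ hij
  have hdisj := (monotone_add_mul_natCast hδ a).pairwise_disjoint_on_Ioc_succ hij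
  simp only [Order.succ_eq_add_one, Nat.cast_add_one, add_one_mul, ← add_assoc, Function.onFun]
    at hdisj
  exact Set.disjoint_left.mpr fun _ hξi hξj => Set.disjoint_left.mp hdisj hξi.2.1 hξj.2.1

theorem le_abs_sub_of_mem_separatedPairs {K : ℕ} {p : ℕ × ℕ} (hp : p ∈ separatedPairs K) {δ : ℝ}
    (hδ : 0 ≤ δ) {a x y : ℝ} (hx : x ∈ Set.Ioc (a + p.1 * δ) (a + p.1 * δ + δ))
    (hy : y ∈ Set.Ioc (a + p.2 * δ) (a + p.2 * δ + δ)) : δ ≤ |x - y| := by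
  have hmono := monotone_add_mul_natCast hδ a
  rcases (Finset.mem_filter.mp hp).2 with h | h
  · have : a + (p.1 + 2 : ℕ) * δ ≤ a + p.2 * δ := hmono h
    push_cast at this
    exact le_abs.mpr (.inr (by linarith [hx.2, hy.1]))
  · have : a + (p.2 + 2 : ℕ) * δ ≤ a + p.1 * δ := hmono h
    push_cast at this
    exact le_abs.mpr (.inl (by linarith [hy.2, hx.1]))

end CubeSlab

section InductionOnScales

variable {k : ℕ} {R : ℝ} {φ : Fin (k + 1) → ℝ → ℝ} {W : Set ℝ} {f : (Fin (k + 2) → ℝ) → ℂ}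

/-- The extension operator of the surface `(ξ, coupledForms φ ξ)` applied to the restriction of
`f` to `cubeSlab n I W`. -/
noncomputable def slabExt {n : ℕ} (φ : Fin n → ℝ → ℝ) (W I : Set ℝ) (f : (Fin (n + 1) → ℝ) → ℂ) :
    (Fin (n + 1 + n) → ℝ) → ℂ :=
  oscIntegral (volume.restrict (cubeSlab n I W)) (graphMap (coupledForms φ)) f

/-- The `L^{n+3}` extension estimate on the ball of radius `R`, with constant `C`, for all the
pieces of the surface over slabs of width `δ` in the first coordinate; here `n = k + 1`. -/
def SlabExtensionBound (R : ℝ) (φ : Fin (k + 1) → ℝ → ℝ) (W : Set ℝ)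
    (f : (Fin (k + 2) → ℝ) → ℂ) (δ : ℝ) (C : ℝ≥0∞) : Prop :=
  ∀ a : ℝ, ∫⁻ x in Metric.ball 0 R, ‖slabExt φ W (Set.Ioc a (a + δ)) f x‖ₑ ^ (k + 4) ≤
    C * volume W ^ (k + 2) * ∫⁻ ξ in cubeSlab (k + 1) (Set.Ioc a (a + δ)) W, ‖f ξ‖ₑ

theorem measurable_slabExt {n : ℕ} {φ : Fin n → ℝ → ℝ} (hφ : ∀ j, Measurable (φ j))
    {f : (Fin (n + 1) → ℝ) → ℂ} (hf : Measurable f) (W I : Set ℝ) :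
    Measurable (slabExt φ W I f) :=
  measurable_oscIntegral (measurable_coupledForms hφ |> measurable_graphMap) hf

theorem setLIntegral_cubeSlab_Ioc_enorm_le (hf1 : ∀ ξ, ‖f ξ‖ₑ ≤ 1) (a δ : ℝ) :
    ∫⁻ ξ in cubeSlab (k + 1) (Set.Ioc a (a + δ)) W, ‖f ξ‖ₑ ≤ ENNReal.ofReal δ * volume W := by
  refine (lintegral_mono hf1).trans ?_
  rw [setLIntegral_one]
  exact (volume_cubeSlab_le _ W).trans_eq (by rw [Real.volume_Ioc, add_sub_cancel_left])

theorem slabExt_Ioc_eq_sum (hφ : ∀ j, Measurable (φ j)) (hW : MeasurableSet W)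
    (hf : Measurable f) (hf1 : ∀ ξ, ‖f ξ‖ₑ ≤ 1) {δ : ℝ} (hδ : 0 ≤ δ) (a : ℝ) (K : ℕ)
    (x : Fin (k + 2 + (k + 1)) → ℝ) :
    slabExt φ W (Set.Ioc a (a + K * δ)) f x =
      ∑ i ∈ Finset.range K, slabExt φ W (Set.Ioc (a + i * δ) (a + i * δ + δ)) f x := by
  rw [slabExt, cubeSlab_Ioc_eq_biUnion hδ]
  refine oscIntegral_biUnion_finset _ (fun i _ => measurableSet_cubeSlab measurableSet_Ioc hW)
    (pairwiseDisjoint_cubeSlab_Ioc hδ a W _) (by fun_prop) (fun i _ => ?_) x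
  have : IsFiniteMeasure (volume.restrict
      (cubeSlab (k + 1) (Set.Ioc (a + i * δ) (a + i * δ + δ)) W)) :=
    ⟨by simpa using volume_cubeSlab_ne_top.lt_top⟩
  exact integrable_of_enorm_le_one hf hf1

theorem slabExtensionBound_of_mul_le (hR : 0 < R) (hφ : ∀ j, Measurable (φ j))
    (hf : Measurable f) (hf1 : ∀ ξ, ‖f ξ‖ₑ ≤ 1) {δ : ℝ} (hδ : δ ≤ 2) (hδR : δ * R ≤ 2) :
    SlabExtensionBound R φ W f δ (2 ^ (k + 2) * gaussLoss (k + 2 + (k + 1))) := by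
  intro a
  set m := ∫⁻ ξ in cubeSlab (k + 1) (Set.Ioc a (a + δ)) W, ‖f ξ‖ₑ
  have hm : m ≤ ENNReal.ofReal δ * volume W := setLIntegral_cubeSlab_Ioc_enorm_le hf1 a δ
  have hscale : ENNReal.ofReal δ ^ (k + 2) * ENNReal.ofReal R ^ (k + 1) ≤ 2 ^ (k + 2) := by
    rw [pow_succ', mul_assoc, ← mul_pow, ← ENNReal.ofReal_mul' hR.le, pow_succ' 2]
    gcongr <;> simpa
  calc ∫⁻ x in Metric.ball 0 R, ‖slabExt φ W (Set.Ioc a (a + δ)) f x‖ₑ ^ (k + 4)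
      ≤ ∫⁻ x in Metric.ball 0 R, m ^ (k + 2) * ‖slabExt φ W (Set.Ioc a (a + δ)) f x‖ₑ ^ 2 := by
        refine lintegral_mono fun x => ?_
        rw [pow_add _ (k + 2) 2]
        gcongr
        exact enorm_oscIntegral_le x
    _ ≤ (ENNReal.ofReal δ * volume W) ^ (k + 2) *
          (gaussLoss (k + 2 + (k + 1)) * ENNReal.ofReal R ^ (k + 1) * m) := by
        rw [lintegral_const_mul _ ((measurable_slabExt hφ hf W _).enorm.pow_const 2)]
        gcongr
        exact setLIntegral_ball_enorm_sq_graphMap_le hR (measurable_coupledForms hφ)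
          volume_cubeSlab_ne_top hf hf1
    _ = ENNReal.ofReal δ ^ (k + 2) * ENNReal.ofReal R ^ (k + 1) * gaussLoss (k + 2 + (k + 1)) *
          volume W ^ (k + 2) * m := by
        ring
    _ ≤ _ := by gcongr

theorem sum_separatedPairs_setLIntegral_slabExt_le (hR : 0 < R) (hφ : ∀ j, Measurable (φ j))
    (hW : MeasurableSet W) (hf : Measurable f) (hf1 : ∀ ξ, ‖f ξ‖ₑ ≤ 1) {δ : ℝ} (hδ : 0 < δ)
    (a : ℝ) (K : ℕ) :
    ∑ p ∈ separatedPairs K, ∫⁻ x in Metric.ball 0 R,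
      (‖slabExt φ W (Set.Ioc (a + p.1 * δ) (a + p.1 * δ + δ)) f x‖ₑ *
        ‖slabExt φ W (Set.Ioc (a + p.2 * δ) (a + p.2 * δ + δ)) f x‖ₑ) ^ 2 ≤
      gaussLoss (k + 2 + (k + 1)) * (volume W * (ENNReal.ofReal δ)⁻¹ ^ (k + 1)) *
        ((∑ i ∈ Finset.range K,
          ∫⁻ ξ in cubeSlab (k + 1) (Set.Ioc (a + i * δ) (a + i * δ + δ)) W, ‖f ξ‖ₑ) *
          (K * (ENNReal.ofReal δ * volume W))) := by
  refine (Finset.sum_le_sum fun p hp => setLIntegral_ball_enorm_sq_mul_coupledForms_le hR hφ hW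
    hδ volume_cubeSlab_ne_top volume_cubeSlab_ne_top (fun ξ hξ => hξ.2.2)
    (fun ξ hξ η hη => le_abs_sub_of_mem_separatedPairs hp hδ.le hξ.2.1 hη.2.1)
    hf hf1 hf hf1).trans ?_
  rw [← Finset.mul_sum]
  gcongr
  set m : ℕ → ℝ≥0∞ := fun i =>
    ∫⁻ ξ in cubeSlab (k + 1) (Set.Ioc (a + i * δ) (a + i * δ + δ)) W, ‖f ξ‖ₑ
  calc ∑ p ∈ separatedPairs K, m p.1 * m p.2
      ≤ ∑ p ∈ Finset.range K ×ˢ Finset.range K, m p.1 * m p.2 :=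
        Finset.sum_le_sum_of_subset (Finset.filter_subset _ _)
    _ = (∑ i ∈ Finset.range K, m i) * ∑ j ∈ Finset.range K, m j :=
        by rw [Finset.sum_mul_sum, Finset.sum_product]
    _ ≤ (∑ i ∈ Finset.range K, m i) * (K * (ENNReal.ofReal δ * volume W)) := by
        gcongr
        exact (Finset.sum_le_card_nsmul _ _ _ fun j _ =>
          setLIntegral_cubeSlab_Ioc_enorm_le hf1 _ δ).trans_eq
            (by rw [Finset.card_range, nsmul_eq_mul])

theorem setLIntegral_slabExt_pow_le_narrow_add_broad (hφ : ∀ j, Measurable (φ j))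
    (hW : MeasurableSet W) (hf : Measurable f) (hf1 : ∀ ξ, ‖f ξ‖ₑ ≤ 1) {δ : ℝ} (hδ : 0 ≤ δ)
    (a : ℝ) (K : ℕ) (B : Set (Fin (k + 2 + (k + 1)) → ℝ)) :
    ∫⁻ x in B, ‖slabExt φ W (Set.Ioc a (a + K * δ)) f x‖ₑ ^ (k + 4) ≤
      4 ^ (k + 4) * (∑ i ∈ Finset.range K,
        ∫⁻ x in B, ‖slabExt φ W (Set.Ioc (a + i * δ) (a + i * δ + δ)) f x‖ₑ ^ (k + 4)) +
      K ^ (k + 6) * (ENNReal.ofReal δ * volume W) ^ k *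
        ∑ p ∈ separatedPairs K, ∫⁻ x in B,
          (‖slabExt φ W (Set.Ioc (a + p.1 * δ) (a + p.1 * δ + δ)) f x‖ₑ *
            ‖slabExt φ W (Set.Ioc (a + p.2 * δ) (a + p.2 * δ + δ)) f x‖ₑ) ^ 2 := by
  set E : ℕ → (Fin (k + 2 + (k + 1)) → ℝ) → ℝ≥0∞ :=
    fun i x => ‖slabExt φ W (Set.Ioc (a + i * δ) (a + i * δ + δ)) f x‖ₑ
  have hEmeas (i : ℕ) : Measurable (E i) := (measurable_slabExt hφ hf W _).enorm
  have hEle (i : ℕ) (x) : E i x ≤ ENNReal.ofReal δ * volume W :=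
    (enorm_oscIntegral_le x).trans (setLIntegral_cubeSlab_Ioc_enorm_le hf1 _ δ)
  calc ∫⁻ x in B, ‖slabExt φ W (Set.Ioc a (a + K * δ)) f x‖ₑ ^ (k + 4)
      ≤ ∫⁻ x in B, (4 ^ (k + 4) * ∑ i ∈ Finset.range K, E i x ^ (k + 4) +
          K ^ (k + 6) * (ENNReal.ofReal δ * volume W) ^ k *
            ∑ p ∈ separatedPairs K, (E p.1 x * E p.2 x) ^ 2) := by
        refine lintegral_mono fun x => ?_
        rw [slabExt_Ioc_eq_sum hφ hW hf hf1 hδ]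
        exact (pow_le_pow_left' (enorm_sum_le _ _) _).trans
          (sum_pow_le_sum_pow_add_sum_separatedPairs k K fun i _ => hEle i x)
    _ = _ := by
        rw [lintegral_add_left (by fun_prop), lintegral_const_mul _ (by fun_prop),
          lintegral_const_mul _ (by fun_prop), lintegral_finsetSum _ (by fun_prop),
          lintegral_finsetSum _ (by fun_prop)]

theorem SlabExtensionBound.natCast_mul (hR : 0 < R) (hφ : ∀ j, Measurable (φ j))
    (hW : MeasurableSet W) (hf : Measurable f) (hf1 : ∀ ξ, ‖f ξ‖ₑ ≤ 1) {δ : ℝ} (hδ : 0 < δ)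
    {C : ℝ≥0∞} (h : SlabExtensionBound R φ W f δ C) (K : ℕ) :
    SlabExtensionBound R φ W f (K * δ)
      (4 ^ (k + 4) * C + K ^ (k + 7) * gaussLoss (k + 2 + (k + 1))) := by
  intro a
  set M := ∫⁻ ξ in cubeSlab (k + 1) (Set.Ioc a (a + K * δ)) W, ‖f ξ‖ₑ
  have hM : M = ∑ i ∈ Finset.range K,
      ∫⁻ ξ in cubeSlab (k + 1) (Set.Ioc (a + i * δ) (a + i * δ + δ)) W, ‖f ξ‖ₑ := by
    rw [← lintegral_biUnion_finset (pairwiseDisjoint_cubeSlab_Ioc hδ.le a W _)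
      fun i _ => measurableSet_cubeSlab measurableSet_Ioc hW, ← cubeSlab_Ioc_eq_biUnion hδ.le]
  have hδ0 : ENNReal.ofReal δ ≠ 0 := (ENNReal.ofReal_pos.mpr hδ).ne'
  calc ∫⁻ x in Metric.ball 0 R, ‖slabExt φ W (Set.Ioc a (a + K * δ)) f x‖ₑ ^ (k + 4)
      ≤ _ := setLIntegral_slabExt_pow_le_narrow_add_broad hφ hW hf hf1 hδ.le a K _
    _ ≤ 4 ^ (k + 4) * (C * volume W ^ (k + 2) * M) +
          K ^ (k + 6) * (ENNReal.ofReal δ * volume W) ^ k *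
            (gaussLoss (k + 2 + (k + 1)) * (volume W * (ENNReal.ofReal δ)⁻¹ ^ (k + 1)) *
              (M * (K * (ENNReal.ofReal δ * volume W)))) := by
        rw [hM]
        refine add_le_add (mul_le_mul_right ?_ _) (mul_le_mul_right
          (sum_separatedPairs_setLIntegral_slabExt_le hR hφ hW hf hf1 hδ a K) _)
        exact (Finset.sum_le_sum fun (i : ℕ) _ => h (a + i * δ)).trans_eq (Finset.mul_sum ..).symm
    _ = (4 ^ (k + 4) * C + K ^ (k + 7) * gaussLoss (k + 2 + (k + 1)) *
          (ENNReal.ofReal δ * (ENNReal.ofReal δ)⁻¹) ^ (k + 1)) * volume W ^ (k + 2) * M := by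
        ring
    _ = _ := by rw [ENNReal.mul_inv_cancel hδ0 ENNReal.ofReal_ne_top, one_pow, mul_one]

end InductionOnScales

section RestrictedType

variable {ι X : Type*} [Fintype ι] [MeasurableSpace X] {μ : Measure X} {T : X → ι → ℝ}
  {ν : Measure (ι → ℝ)} {f : X → ℂ} {p q : ℝ} {A B : ℝ≥0∞}

/-- The restricted type estimate `∫ |E g|^p dν ≤ A ∫ |g| dμ` for the oscillatory integral operator
`E = oscIntegral μ T` and all functions `|g| ≤ 1`; for `g = 1_s` it bounds `‖E 1_s‖_p` by
`A^{1/p} μ(s)^{1/p}`. -/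
def RestrictedTypeBound (μ : Measure X) (T : X → ι → ℝ) (ν : Measure (ι → ℝ)) (p : ℝ)
    (A : ℝ≥0∞) : Prop :=
  ∀ g : X → ℂ, Measurable g → (∀ u, ‖g u‖ₑ ≤ 1) →
    ∫⁻ x, ‖oscIntegral μ T g x‖ₑ ^ p ∂ν ≤ A * ∫⁻ u, ‖g u‖ₑ ∂μ

theorem RestrictedTypeBound.interpolate [SFinite μ] (hT : Measurable T)
    (hA : RestrictedTypeBound μ T ν p A) (hB : RestrictedTypeBound μ T ν q B) (hp : 0 ≤ p)
    (hq : 0 ≤ q) {θ : ℝ} (hθ : 0 ≤ θ) (hθ1 : θ ≤ 1) :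
    RestrictedTypeBound μ T ν (p * (1 - θ) + q * θ) (A ^ (1 - θ) * B ^ θ) := by
  intro g hg hg1
  have hθ' : 0 ≤ 1 - θ := sub_nonneg.mpr hθ1
  have hE : Measurable (oscIntegral μ T g) := measurable_oscIntegral hT hg
  calc ∫⁻ x, ‖oscIntegral μ T g x‖ₑ ^ (p * (1 - θ) + q * θ) ∂ν
      = ∫⁻ x, (‖oscIntegral μ T g x‖ₑ ^ p) ^ (1 - θ) * (‖oscIntegral μ T g x‖ₑ ^ q) ^ θ ∂ν := by
        refine lintegral_congr fun x => ?_
        rw [ENNReal.rpow_add_of_nonneg _ _ (by positivity) (by positivity), ENNReal.rpow_mul,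
          ENNReal.rpow_mul]
    _ ≤ (∫⁻ x, ‖oscIntegral μ T g x‖ₑ ^ p ∂ν) ^ (1 - θ) *
          (∫⁻ x, ‖oscIntegral μ T g x‖ₑ ^ q ∂ν) ^ θ :=
        ENNReal.lintegral_mul_norm_pow_le (hE.enorm.pow_const p).aemeasurable
          (hE.enorm.pow_const q).aemeasurable hθ' hθ (sub_add_cancel 1 θ)
    _ ≤ (A * ∫⁻ u, ‖g u‖ₑ ∂μ) ^ (1 - θ) * (B * ∫⁻ u, ‖g u‖ₑ ∂μ) ^ θ := by
        gcongr
        exacts [hA g hg hg1, hB g hg hg1]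
    _ = A ^ (1 - θ) * B ^ θ * ∫⁻ u, ‖g u‖ₑ ∂μ := by
        rw [ENNReal.mul_rpow_of_nonneg _ _ hθ', ENNReal.mul_rpow_of_nonneg _ _ hθ,
          mul_mul_mul_comm, ← ENNReal.rpow_add_of_nonneg _ _ hθ' hθ, sub_add_cancel,
          ENNReal.rpow_one]

theorem eLpNorm_ofReal_eq {Y : Type*} [MeasurableSpace Y] (ρ : Measure Y) (F : Y → ℂ)
    (hp : 0 < p) : eLpNorm F (ENNReal.ofReal p) ρ = (∫⁻ x, ‖F x‖ₑ ^ p ∂ρ) ^ (1 / p) := by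
  rw [eLpNorm_eq_lintegral_rpow_enorm_toReal (ENNReal.ofReal_pos.mpr hp).ne'
    ENNReal.ofReal_ne_top, ENNReal.toReal_ofReal hp.le]

theorem eLpNorm_oscIntegral_const_mul (a : ℂ) (s : ℝ≥0∞) :
    eLpNorm (oscIntegral μ T fun u => a * f u) s ν = ‖a‖ₑ * eLpNorm (oscIntegral μ T f) s ν := by
  rw [show (oscIntegral μ T fun u => a * f u) = a • oscIntegral μ T f from
    funext (oscIntegral_const_mul a), eLpNorm_const_smul]

theorem RestrictedTypeBound.eLpNorm_le_of_enorm_le (h : RestrictedTypeBound μ T ν p A)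
    (hp : 1 ≤ p) (hf : Measurable f) {b : NNReal} (hb : b ≠ 0) (hfb : ∀ u, ‖f u‖ₑ ≤ b) :
    eLpNorm (oscIntegral μ T f) (ENNReal.ofReal p) ν ≤
      (A * ((b : ℝ≥0∞) ^ (p - 1) * ∫⁻ u, ‖f u‖ₑ ∂μ)) ^ (1 / p) := by
  have hp0 : 0 < p := by linarith
  have hb' : (b : ℝ≥0∞) ≠ 0 := by simpa
  set a : ℂ := ((b : ℝ) : ℂ)
  have ha : ‖a‖ₑ = b := by simp [a, enorm]
  have ha0 : a ≠ 0 := by simpa [a]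
  set g : X → ℂ := fun u => a⁻¹ * f u
  have hfg : f = fun u => a * g u := funext fun u => (mul_inv_cancel_left₀ ha0 _).symm
  have hg (u : X) : ‖g u‖ₑ = (b : ℝ≥0∞)⁻¹ * ‖f u‖ₑ := by
    rw [enorm_mul, enorm_inv ha0, ha]
  have hg1 (u : X) : ‖g u‖ₑ ≤ 1 := by
    rw [hg, mul_comm, ← div_eq_mul_inv]
    exact ENNReal.div_le_of_le_mul (by simpa using hfb u)
  have hpow : (b : ℝ≥0∞) ^ (p - 1) = b ^ p * (b : ℝ≥0∞)⁻¹ := by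
    rw [ENNReal.rpow_sub _ _ hb' ENNReal.coe_ne_top, ENNReal.rpow_one, div_eq_mul_inv]
  calc eLpNorm (oscIntegral μ T f) (ENNReal.ofReal p) ν
      = b * (∫⁻ x, ‖oscIntegral μ T g x‖ₑ ^ p ∂ν) ^ (1 / p) := by
        rw [hfg, eLpNorm_oscIntegral_const_mul, ha, eLpNorm_ofReal_eq _ _ hp0]
    _ ≤ b * (A * ∫⁻ u, ‖g u‖ₑ ∂μ) ^ (1 / p) := by
        gcongr
        exact h g (hf.const_mul _) hg1
    _ = ((b : ℝ≥0∞) ^ p * (A * ∫⁻ u, ‖g u‖ₑ ∂μ)) ^ (1 / p) := by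
        rw [ENNReal.mul_rpow_of_nonneg (b ^ p : ℝ≥0∞) _ (by positivity), one_div,
          ENNReal.rpow_rpow_inv hp0.ne']
    _ = _ := by
        simp only [hg]
        rw [lintegral_const_mul _ hf.enorm, hpow]
        ring_nf

theorem rpow_sub_one_mul_self (hp : 1 ≤ p) (x : ℝ≥0∞) : x ^ (p - 1) * x = x ^ p := by
  conv_lhs => enter [2]; rw [← ENNReal.rpow_one x]
  rw [← ENNReal.rpow_add_of_nonneg _ _ (sub_nonneg.mpr hp) zero_le_one, sub_add_cancel]

theorem rpow_sub_one_mul_setLIntegral_enorm_le (hf : Measurable f) (hp : 1 ≤ p) (b : ℝ≥0∞) :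
    b ^ (p - 1) * ∫⁻ u in {u | b < ‖f u‖ₑ}, ‖f u‖ₑ ∂μ ≤ ∫⁻ u, ‖f u‖ₑ ^ p ∂μ := by
  rw [← lintegral_const_mul _ hf.enorm]
  refine (setLIntegral_mono' (measurableSet_lt measurable_const hf.enorm) fun u hu => ?_).trans
    (setLIntegral_le_lintegral _ _)
  rw [← rpow_sub_one_mul_self hp]
  exact mul_le_mul_left (ENNReal.rpow_le_rpow (le_of_lt hu) (sub_nonneg.mpr hp)) _

theorem lintegral_enorm_indicator {s : Set X} (hs : MeasurableSet s) :
    ∫⁻ u, ‖s.indicator f u‖ₑ ∂μ = ∫⁻ u in s, ‖f u‖ₑ ∂μ := by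
  simp only [enorm_indicator_eq_indicator_enorm, lintegral_indicator hs]

theorem RestrictedTypeBound.eLpNorm_annulus_le (h : RestrictedTypeBound μ T ν p A) (hp : 1 ≤ p)
    (hf : Measurable f) {b r : NNReal} (hb : b ≠ 0) (hr : r ≠ 0) :
    eLpNorm (oscIntegral μ T ({u | b < ‖f u‖ₑ ∧ ‖f u‖ₑ ≤ r * b}.indicator f))
      (ENNReal.ofReal p) ν ≤ (A * r ^ (p - 1) * ∫⁻ u, ‖f u‖ₑ ^ p ∂μ) ^ (1 / p) := by
  set s := {u | b < ‖f u‖ₑ ∧ ‖f u‖ₑ ≤ r * b}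
  have hs : MeasurableSet s := (measurableSet_lt measurable_const hf.enorm).inter
    (measurableSet_le hf.enorm measurable_const)
  have hbound (u : X) : ‖s.indicator f u‖ₑ ≤ (r * b : NNReal) := by
    by_cases hu : u ∈ s
    · simpa [hu] using hu.2
    · simp [hu]
  have hp' : 0 ≤ p - 1 := sub_nonneg.mpr hp
  refine (h.eLpNorm_le_of_enorm_le hp (hf.indicator hs) (mul_ne_zero hr hb) hbound).trans ?_
  rw [ENNReal.coe_mul, ENNReal.mul_rpow_of_nonneg _ _ hp', lintegral_enorm_indicator hs, mul_assoc,
    mul_assoc A]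
  gcongr
  exact (mul_le_mul_right (lintegral_mono_set fun u hu => hu.1) _).trans
    (rpow_sub_one_mul_setLIntegral_enorm_le hf hp _)

theorem oscIntegral_indicator_add_indicator (hT : Measurable T) (hf : Integrable f μ) {s t : Set X}
    (hs : MeasurableSet s) (ht : MeasurableSet t) (hst : Disjoint s t) :
    oscIntegral μ T ((s ∪ t).indicator f) =
      oscIntegral μ T (s.indicator f) + oscIntegral μ T (t.indicator f) := by
  have hθ (x : ι → ℝ) : Measurable fun u => x ⬝ᵥ T u := by unfold dotProduct; fun_prop
  ext x
  rw [Pi.add_apply, oscIntegral, oscIntegral, oscIntegral, ← integral_add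
    (integrable_mul_fourierChar (hθ x) (hf.indicator hs))
    (integrable_mul_fourierChar (hθ x) (hf.indicator ht)), Set.indicator_union_of_disjoint hst]
  simp only [add_mul]

theorem RestrictedTypeBound.eLpNorm_truncation_one_le (h : RestrictedTypeBound μ T ν p A)
    (hp : 1 ≤ p) (hf : Measurable f) :
    eLpNorm (oscIntegral μ T ({u | ‖f u‖ₑ ≤ 1}.indicator f)) (ENNReal.ofReal p) ν ≤
      (A * μ Set.univ) ^ (1 / p) := by
  set s := {u | ‖f u‖ₑ ≤ 1}
  have hs1 (u : X) : ‖s.indicator f u‖ₑ ≤ (1 : NNReal) := by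
    by_cases hu : u ∈ s
    · rw [Set.indicator_of_mem hu]
      exact hu
    · simp [hu]
  refine (h.eLpNorm_le_of_enorm_le hp (hf.indicator (measurableSet_le hf.enorm measurable_const))
    one_ne_zero hs1).trans ?_
  rw [ENNReal.coe_one, ENNReal.one_rpow, one_mul]
  gcongr
  exact (lintegral_mono hs1).trans_eq (by simp)

theorem RestrictedTypeBound.eLpNorm_truncation_le [SFinite μ] (hT : Measurable T)
    (h : RestrictedTypeBound μ T ν p A) (hp : 1 ≤ p) (hf : Measurable f) (hfi : Integrable f μ)
    (hfp : ∫⁻ u, ‖f u‖ₑ ^ p ∂μ ≤ μ Set.univ) {r : NNReal} (hr : 1 ≤ r) (N : ℕ) :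
    eLpNorm (oscIntegral μ T ({u | ‖f u‖ₑ ≤ (r : ℝ≥0∞) ^ N}.indicator f)) (ENNReal.ofReal p) ν ≤
      (N + 1) * (A * r ^ (p - 1) * μ Set.univ) ^ (1 / p) := by
  have hle (b : ℝ≥0∞) : MeasurableSet {u | ‖f u‖ₑ ≤ b} := measurableSet_le hf.enorm measurable_const
  have hr0 : r ≠ 0 := (zero_lt_one.trans_le hr).ne'
  have hp' : 0 ≤ p - 1 := sub_nonneg.mpr hp
  induction N with
  | zero =>
    simp only [pow_zero, Nat.cast_zero, zero_add, one_mul]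
    refine (h.eLpNorm_truncation_one_le hp hf).trans ?_
    gcongr
    exact le_mul_of_one_le_right'
      ((ENNReal.one_rpow (p - 1)).ge.trans (ENNReal.rpow_le_rpow (by exact_mod_cast hr) hp'))
  | succ N ih =>
    set annulus := {u | ((r ^ N : NNReal) : ℝ≥0∞) < ‖f u‖ₑ ∧ ‖f u‖ₑ ≤ r * (r ^ N : NNReal)}
    have hannulus : MeasurableSet annulus :=
      (measurableSet_lt measurable_const hf.enorm).inter (hle _)
    have hsplit : {u | ‖f u‖ₑ ≤ (r : ℝ≥0∞) ^ (N + 1)} =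
        {u | ‖f u‖ₑ ≤ (r : ℝ≥0∞) ^ N} ∪ annulus := by
      have hmono : (r : ℝ≥0∞) ^ N ≤ r ^ (N + 1) :=
        pow_le_pow_right' (by exact_mod_cast hr) N.le_succ
      ext u
      simp only [annulus, Set.mem_union, Set.mem_ofPred_eq, ENNReal.coe_pow, ← pow_succ']
      exact ⟨fun hu => (le_or_gt _ _).imp_right (⟨·, hu⟩), fun hu => hu.elim hmono.trans' (·.2)⟩
    have hdisj : Disjoint {u | ‖f u‖ₑ ≤ (r : ℝ≥0∞) ^ N} annulus :=
      Set.disjoint_left.mpr fun u hu hu' => hu.not_gt (by simpa using hu'.1)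
    rw [hsplit, oscIntegral_indicator_add_indicator hT hfi (hle _) hannulus hdisj]
    refine (eLpNorm_add_le (measurable_oscIntegral hT (hf.indicator (hle _))).aestronglyMeasurable
      (measurable_oscIntegral hT (hf.indicator hannulus)).aestronglyMeasurable
      (ENNReal.one_le_ofReal.mpr hp)).trans ?_
    rw [Nat.cast_succ, add_one_mul]
    gcongr
    exact (h.eLpNorm_annulus_le hp hf (pow_ne_zero N hr0) hr0).trans (by gcongr)

theorem eLpNorm_oscIntegral_le (hp : 0 < p) :
    eLpNorm (oscIntegral μ T f) (ENNReal.ofReal p) ν ≤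
      ν Set.univ ^ (1 / p) * ∫⁻ u, ‖f u‖ₑ ∂μ := by
  rw [eLpNorm_ofReal_eq _ _ hp]
  calc (∫⁻ x, ‖oscIntegral μ T f x‖ₑ ^ p ∂ν) ^ (1 / p)
      ≤ (∫⁻ _, (∫⁻ u, ‖f u‖ₑ ∂μ) ^ p ∂ν) ^ (1 / p) := by
        gcongr with x
        exact enorm_oscIntegral_le x
    _ = _ := by
        rw [lintegral_const, mul_comm, ENNReal.mul_rpow_of_nonneg _ _ (by positivity), one_div,
          ENNReal.rpow_rpow_inv hp.ne']

theorem RestrictedTypeBound.eLpNorm_le_of_eLpNorm_le [IsFiniteMeasure μ] (hT : Measurable T)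
    (h : RestrictedTypeBound μ T ν p A) (hp : 1 ≤ p) (hf : Measurable f)
    (hfp : eLpNorm f (ENNReal.ofReal p) μ ≤ μ Set.univ ^ (1 / p)) {r : NNReal} (hr : 1 ≤ r)
    {N : ℕ} {D : ℝ≥0∞} (hD : ν Set.univ ^ (1 / p) ≤ D * ((r : ℝ≥0∞) ^ N) ^ (p - 1)) :
    eLpNorm (oscIntegral μ T f) (ENNReal.ofReal p) ν ≤
      (N + 1) * (A * r ^ (p - 1) * μ Set.univ) ^ (1 / p) + D * μ Set.univ := by
  have hp0 : 0 < p := by linarith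
  have hp1 : 1 ≤ ENNReal.ofReal p := ENNReal.one_le_ofReal.mpr hp
  have hfi : Integrable f μ := MemLp.integrable hp1 ⟨hf.aestronglyMeasurable,
    hfp.trans_lt (ENNReal.rpow_lt_top_of_nonneg (by positivity) (measure_ne_top _ _))⟩
  rw [eLpNorm_ofReal_eq _ _ hp0, ENNReal.rpow_le_rpow_iff (by positivity)] at hfp
  set low := {u | ‖f u‖ₑ ≤ (r : ℝ≥0∞) ^ N}
  set high := {u | (r : ℝ≥0∞) ^ N < ‖f u‖ₑ}
  have hlow : MeasurableSet low := measurableSet_le hf.enorm measurable_const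
  have hhigh : MeasurableSet high := measurableSet_lt measurable_const hf.enorm
  have hsplit : f = (low ∪ high).indicator f := by
    rw [show low ∪ high = Set.univ from
      Set.eq_univ_of_forall fun u => le_or_gt ‖f u‖ₑ (r ^ N), Set.indicator_univ]
  have hhigh_le : eLpNorm (oscIntegral μ T (high.indicator f)) (ENNReal.ofReal p) ν ≤
      D * μ Set.univ :=
    calc _ ≤ ν Set.univ ^ (1 / p) * ∫⁻ u in high, ‖f u‖ₑ ∂μ :=
          (eLpNorm_oscIntegral_le hp0).trans_eq (by rw [lintegral_enorm_indicator hhigh])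
      _ ≤ D * ((r : ℝ≥0∞) ^ N) ^ (p - 1) * ∫⁻ u in high, ‖f u‖ₑ ∂μ := by gcongr
      _ ≤ D * μ Set.univ := by
          rw [mul_assoc]
          gcongr
          exact (rpow_sub_one_mul_setLIntegral_enorm_le hf hp _).trans hfp
  conv_lhs => rw [hsplit]
  rw [oscIntegral_indicator_add_indicator hT hfi hlow hhigh
    (Set.disjoint_left.mpr fun u (hu : ‖f u‖ₑ ≤ r ^ N) => not_lt.mpr hu)]
  refine (eLpNorm_add_le (measurable_oscIntegral hT (hf.indicator hlow)).aestronglyMeasurable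
    (measurable_oscIntegral hT (hf.indicator hhigh)).aestronglyMeasurable hp1).trans ?_
  exact add_le_add (h.eLpNorm_truncation_le hT hp hf hfi hfp hr N) hhigh_le

theorem eLpNorm_oscIntegral_le_div_mul (hf : Measurable f) {s c M : ℝ≥0∞} (hs : s ≠ 0)
    (hfs : eLpNorm f s μ ≠ ∞) (hc : c ≠ 0) (hctop : c ≠ ∞)
    (h : ∀ g : X → ℂ, Measurable g → eLpNorm g s μ ≤ c → eLpNorm (oscIntegral μ T g) s ν ≤ M) :
    eLpNorm (oscIntegral μ T f) s ν ≤ M / c * eLpNorm f s μ := by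
  set L := eLpNorm f s μ
  rcases eq_or_ne L 0 with hL | hL
  · have hf0 : f =ᵐ[μ] 0 := (eLpNorm_eq_zero_iff hf.aestronglyMeasurable hs).mp hL
    have hE0 : oscIntegral μ T f = 0 := funext fun x =>
      integral_eq_zero_of_ae (hf0.mono fun u hu => by simp [hu])
    rw [hE0, eLpNorm_zero]
    exact zero_le
  have hb0 : L / c ≠ 0 := ENNReal.div_ne_zero.mpr ⟨hL, hctop⟩
  have hbtop : L / c ≠ ∞ := ENNReal.div_ne_top hfs hc
  set a : ℂ := ((L / c).toReal : ℂ)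
  have ha : ‖a‖ₑ = L / c := by
    rw [← ofReal_norm, Complex.norm_real, Real.norm_of_nonneg ENNReal.toReal_nonneg,
      ENNReal.ofReal_toReal hbtop]
  have ha0 : a ≠ 0 := fun ha' => hb0 (by rw [← ha, ha', enorm_zero])
  have hfa : f = fun u => a * (a⁻¹ * f u) := funext fun u => (mul_inv_cancel_left₀ ha0 _).symm
  have hnorm : eLpNorm (fun u => a⁻¹ * f u) s μ = c := by
    rw [show (fun u => a⁻¹ * f u) = a⁻¹ • f from rfl, eLpNorm_const_smul, enorm_inv ha0, ha,
      ENNReal.inv_div (.inl hctop) (.inl hc), ENNReal.div_mul_cancel hL hfs]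
  calc eLpNorm (oscIntegral μ T f) s ν
      = L / c * eLpNorm (oscIntegral μ T fun u => a⁻¹ * f u) s ν := by
        conv_lhs => rw [hfa]
        rw [eLpNorm_oscIntegral_const_mul, ha]
    _ ≤ L / c * M := by
        gcongr
        exact h _ (hf.const_mul _) hnorm.le
    _ = M / c * L := by
        simp only [div_eq_mul_inv]
        ring

theorem RestrictedTypeBound.eLpNorm_le [IsFiniteMeasure μ] (hT : Measurable T)
    (h : RestrictedTypeBound μ T ν p A) (hp : 1 ≤ p) (hf : Measurable f) {r : NNReal}
    (hr : 1 ≤ r) {N : ℕ} {D : ℝ≥0∞}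
    (hD : ν Set.univ ^ (1 / p) ≤ D * ((r : ℝ≥0∞) ^ N) ^ (p - 1)) :
    eLpNorm (oscIntegral μ T f) (ENNReal.ofReal p) ν ≤
      ((N + 1) * (A * r ^ (p - 1)) ^ (1 / p) + D * μ Set.univ ^ (1 - 1 / p)) *
        eLpNorm f (ENNReal.ofReal p) μ := by
  have hp0 : 0 < p := by linarith
  rcases eq_zero_or_neZero μ with rfl | _
  · rw [show oscIntegral 0 T f = 0 from funext fun _ => integral_zero_measure _, eLpNorm_zero]
    exact zero_le
  set V := μ Set.univ
  have hV0 : V ≠ 0 := NeZero.ne _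
  have hVtop : V ≠ ∞ := measure_ne_top _ _
  have hVp0 : V ^ (1 / p) ≠ 0 := by simp [ENNReal.rpow_eq_zero_iff, hV0, hVtop]
  have hVptop : V ^ (1 / p) ≠ ∞ := ENNReal.rpow_ne_top_of_nonneg (by positivity) hVtop
  rcases eq_or_ne (eLpNorm f (ENNReal.ofReal p) μ) ∞ with hfp | hfp
  · rcases eq_or_ne D 0 with rfl | hD0
    · have hν : ν = 0 := by simpa [hp0, hp0.not_gt] using hD
      simp [hν]
    · have hcoeff : D * V ^ (1 - 1 / p) ≠ 0 := by
        simp [ENNReal.rpow_eq_zero_iff, hD0, hV0, hVtop]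
      rw [hfp, ENNReal.mul_top fun h0 => hcoeff (add_eq_zero.mp h0).2]
      exact le_top
  refine (eLpNorm_oscIntegral_le_div_mul hf (ENNReal.ofReal_pos.mpr hp0).ne' hfp hVp0 hVptop
    fun g hg hgV => h.eLpNorm_le_of_eLpNorm_le hT hp hg hgV hr hD).trans_eq ?_
  congr 1
  rw [ENNReal.add_div, mul_div_assoc, mul_div_assoc, ENNReal.rpow_sub _ _ hV0 hVtop,
    ENNReal.rpow_one, ENNReal.mul_rpow_of_nonneg _ _ (by positivity),
    ENNReal.mul_div_cancel_right hVp0 hVptop]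

end RestrictedType

section ScaleIteration

variable {k : ℕ} {R : ℝ} {φ : Fin (k + 1) → ℝ → ℝ} {W : Set ℝ} {f : (Fin (k + 2) → ℝ) → ℂ}

theorem SlabExtensionBound.mono {δ : ℝ} {C C' : ℝ≥0∞} (h : SlabExtensionBound R φ W f δ C)
    (hC : C ≤ C') : SlabExtensionBound R φ W f δ C' :=
  fun a => (h a).trans (by gcongr)

theorem SlabExtensionBound.natCast_pow_mul (hR : 0 < R) (hφ : ∀ j, Measurable (φ j))
    (hW : MeasurableSet W) (hf : Measurable f) (hf1 : ∀ ξ, ‖f ξ‖ₑ ≤ 1) {δ : ℝ} (hδ : 0 < δ)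
    {C : ℝ≥0∞} (h : SlabExtensionBound R φ W f δ C) {K : ℕ} (hK : 0 < K) (J : ℕ) :
    SlabExtensionBound R φ W f (K ^ J * δ)
      ((4 ^ (k + 4) + 1) ^ J * (C + K ^ (k + 7) * gaussLoss (k + 2 + (k + 1)))) := by
  set B := (K : ℝ≥0∞) ^ (k + 7) * gaussLoss (k + 2 + (k + 1))
  induction J with
  | zero => simpa using h.mono le_self_add
  | succ J ih =>
    rw [pow_succ' (K : ℝ), mul_assoc]
    refine (ih.natCast_mul hR hφ hW hf hf1 (by positivity) K).mono ?_
    have hB : B ≤ (4 ^ (k + 4) + 1) ^ J * (C + B) :=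
      le_add_self.trans (le_mul_of_one_le_left' (one_le_pow_of_one_le' le_add_self J))
    calc _ ≤ 4 ^ (k + 4) * ((4 ^ (k + 4) + 1) ^ J * (C + B)) +
          (4 ^ (k + 4) + 1) ^ J * (C + B) := by gcongr
      _ = (4 ^ (k + 4) + 1) ^ (J + 1) * (C + B) := by ring

theorem exists_natCast_pow_near_forall_pow_le_rpow (A : ℝ) (hA : 0 ≤ A) {ε : ℝ} (hε : 0 < ε) :
    ∃ K : ℕ, 0 < K ∧ ∀ R : ℝ, 1 ≤ R → ∃ J : ℕ, R ≤ K ^ J ∧ A ^ J ≤ (K * R) ^ ε := by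
  have htendsto := (tendsto_rpow_atTop hε).comp (tendsto_natCast_atTop_atTop (R := ℝ))
  obtain ⟨K, hAK, hK⟩ :=
    ((htendsto.eventually_ge_atTop A).and (Filter.eventually_gt_atTop 1)).exists
  refine ⟨K, by omega, fun R hR => ?_⟩
  obtain ⟨j, hj, hj'⟩ := exists_nat_pow_near hR (Nat.one_lt_cast.mpr hK)
  refine ⟨j + 1, hj'.le, ?_⟩
  calc A ^ (j + 1) ≤ ((K : ℝ) ^ ε) ^ (j + 1) := by gcongr; exact hAK
    _ = ((K : ℝ) ^ (j + 1)) ^ ε := (Real.rpow_pow_comm (by positivity) ..)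
    _ ≤ (K * R) ^ ε := by
        rw [pow_succ']
        gcongr

theorem exists_slabExtensionBound_two (k : ℕ) {ε : ℝ} (hε : 0 < ε) :
    ∃ C : ℝ≥0∞, C ≠ ∞ ∧ ∀ R : ℝ, 1 ≤ R → ∀ φ : Fin (k + 1) → ℝ → ℝ, (∀ j, Measurable (φ j)) →
      ∀ W : Set ℝ, MeasurableSet W → ∀ f : (Fin (k + 2) → ℝ) → ℂ, Measurable f →
        (∀ ξ, ‖f ξ‖ₑ ≤ 1) → SlabExtensionBound R φ W f 2 (C * ENNReal.ofReal R ^ ε) := by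
  obtain ⟨K, hK, hscale⟩ :=
    exists_natCast_pow_near_forall_pow_le_rpow (4 ^ (k + 4) + 1) (by positivity) hε
  set B : ℝ≥0∞ := 2 ^ (k + 2) * gaussLoss (k + 2 + (k + 1)) +
    K ^ (k + 7) * gaussLoss (k + 2 + (k + 1))
  refine ⟨(K : ℝ≥0∞) ^ ε * B, ?_, fun R hR φ hφ W hW f hf hf1 => ?_⟩
  · have hKε : (K : ℝ≥0∞) ^ ε ≠ ∞ := ENNReal.rpow_ne_top_of_nonneg hε.le (ENNReal.natCast_ne_top K)
    have hgauss : gaussLoss (k + 2 + (k + 1)) ≠ ∞ := gaussLoss_ne_top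
    finiteness
  obtain ⟨J, hRK, hJ⟩ := hscale R hR
  have hR0 : 0 < R := by linarith
  have hKJ : (0 : ℝ) < K ^ J := by positivity
  have hbase := slabExtensionBound_of_mul_le (W := W) (δ := 2 / K ^ J) hR0 hφ hf hf1
    (div_le_self zero_le_two (hR.trans hRK))
    (by rw [div_mul_eq_mul_div, div_le_iff₀ hKJ]; linarith)
  have htop := hbase.natCast_pow_mul hR0 hφ hW hf hf1 (by positivity) hK J
  rw [mul_div_cancel₀ _ hKJ.ne'] at htop
  refine htop.mono ?_
  have hJ' : ((4 : ℝ≥0∞) ^ (k + 4) + 1) ^ J ≤ (K : ℝ≥0∞) ^ ε * ENNReal.ofReal R ^ ε := by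
    rw [← ENNReal.mul_rpow_of_nonneg _ _ hε.le, ← ENNReal.ofReal_natCast,
      ← ENNReal.ofReal_mul (by positivity), ENNReal.ofReal_rpow_of_pos (by positivity)]
    refine (ENNReal.ofReal_le_ofReal hJ).trans' (le_of_eq ?_)
    rw [ENNReal.ofReal_pow (by positivity), ENNReal.ofReal_add (by positivity) zero_le_one,
      ENNReal.ofReal_pow (by positivity)]
    simp
  calc _ ≤ (K : ℝ≥0∞) ^ ε * ENNReal.ofReal R ^ ε * B := by gcongr
    _ = _ := by ring

end ScaleIteration

section Interpolation

variable {n : ℕ}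

theorem exists_restrictedTypeBound_two (n : ℕ) :
    ∃ C : ℝ≥0∞, C ≠ ∞ ∧ ∀ R : ℝ, 0 < R → ∀ φ : Fin n → ℝ → ℝ, (∀ j, Measurable (φ j)) →
      ∀ W : Set ℝ, RestrictedTypeBound (volume.restrict (cubeSlab n Set.univ W))
        (graphMap (coupledForms φ)) (volume.restrict (Metric.ball 0 R)) 2
        (C * ENNReal.ofReal R ^ n) :=
  ⟨gaussLoss (n + 1 + n), gaussLoss_ne_top, fun R hR φ hφ W g hg hg1 => by
    simpa only [ENNReal.rpow_two] using setLIntegral_ball_enorm_sq_graphMap_le hR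
      (measurable_coupledForms hφ) volume_cubeSlab_ne_top hg hg1⟩

theorem cubeSlab_Ioc_neg_one_one (W : Set ℝ) :
    cubeSlab n (Set.Ioc (-1) 1) W = cubeSlab n Set.univ W := by
  ext ξ
  simp only [cubeSlab, Set.mem_inter_iff, Set.mem_Icc, Set.mem_ofPred_eq, Set.mem_Ioc,
    Set.mem_univ, true_and, and_congr_right_iff, and_iff_right_iff_imp]
  exact fun hξ _ => ⟨neg_one_lt_zero.trans_le (hξ.1 0), hξ.2 0⟩

theorem exists_restrictedTypeBound_add_three (hn : n ≠ 0) {ε : ℝ} (hε : 0 < ε) :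
    ∃ C : ℝ≥0∞, C ≠ ∞ ∧ ∀ R : ℝ, 1 ≤ R → ∀ φ : Fin n → ℝ → ℝ, (∀ j, Measurable (φ j)) →
      ∀ W : Set ℝ, MeasurableSet W →
        RestrictedTypeBound (volume.restrict (cubeSlab n Set.univ W)) (graphMap (coupledForms φ))
          (volume.restrict (Metric.ball 0 R)) (n + 3)
          (C * ENNReal.ofReal R ^ ε * volume W ^ (n + 1)) := by
  obtain ⟨k, rfl⟩ := Nat.exists_eq_succ_of_ne_zero hn
  obtain ⟨C, hC, h⟩ := exists_slabExtensionBound_two k hε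
  refine ⟨C, hC, fun R hR φ hφ W hW g hg hg1 => ?_⟩
  have hexp : ((k.succ : ℕ) : ℝ) + 3 = (k + 4 : ℕ) := by push_cast; ring
  have hslab := h R hR φ hφ W hW g hg hg1 (-1)
  rw [slabExt, show (-1 : ℝ) + 2 = 1 by norm_num, cubeSlab_Ioc_neg_one_one] at hslab
  simpa only [hexp, ENNReal.rpow_natCast] using hslab

theorem exists_restrictedTypeBound_coupledForms (hn : n ≠ 0) {ε : ℝ} (hε : 0 < ε) {p : ℝ}
    (hp2 : 2 ≤ p) (hpn : p ≤ n + 3) :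
    ∃ C : ℝ≥0∞, C ≠ ∞ ∧ ∀ R : ℝ, 1 ≤ R → ∀ φ : Fin n → ℝ → ℝ, (∀ j, Measurable (φ j)) →
      ∀ W : Set ℝ, MeasurableSet W →
        RestrictedTypeBound (volume.restrict (cubeSlab n Set.univ W)) (graphMap (coupledForms φ))
          (volume.restrict (Metric.ball 0 R)) p
          (C * ENNReal.ofReal R ^ (n * (n + 3 - p) / (n + 1) + ε) * volume W ^ (p - 2)) := by
  obtain ⟨C₂, hC₂, h₂⟩ := exists_restrictedTypeBound_two n
  obtain ⟨C₃, hC₃, h₃⟩ := exists_restrictedTypeBound_add_three hn hε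
  set θ : ℝ := (p - 2) / (n + 1)
  have hθ : 0 ≤ θ := div_nonneg (by linarith) (by positivity)
  have hθ1 : θ ≤ 1 := (div_le_one (by positivity)).mpr (by linarith)
  have hθ' : 0 ≤ 1 - θ := sub_nonneg.mpr hθ1
  refine ⟨C₂ ^ (1 - θ) * C₃ ^ θ, by finiteness, fun R hR φ hφ W hW g hg hg1 => ?_⟩
  have hR0 : 0 < R := by linarith
  have hρ0 : ENNReal.ofReal R ≠ 0 := (ENNReal.ofReal_pos.mpr hR0).ne'
  have hρ1 : 1 ≤ ENNReal.ofReal R := ENNReal.one_le_ofReal.mpr hR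
  have hinterp := (h₂ R hR0 φ hφ W).interpolate (measurable_graphMap (measurable_coupledForms hφ))
    (h₃ R hR φ hφ W hW) zero_le_two (by positivity) hθ hθ1
  have hp : 2 * (1 - θ) + (n + 3) * θ = p := by simp only [θ]; field_simp; ring
  rw [hp] at hinterp
  refine (hinterp g hg hg1).trans (mul_le_mul_left ?_ _)
  calc (C₂ * ENNReal.ofReal R ^ n) ^ (1 - θ) *
        (C₃ * ENNReal.ofReal R ^ ε * volume W ^ (n + 1)) ^ θ
      = C₂ ^ (1 - θ) * C₃ ^ θ * ENNReal.ofReal R ^ (n * (1 - θ) + ε * θ) *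
          volume W ^ ((n + 1) * θ) := by
        rw [ENNReal.rpow_add _ _ hρ0 ENNReal.ofReal_ne_top, ENNReal.mul_rpow_of_nonneg _ _ hθ',
          ENNReal.mul_rpow_of_nonneg _ _ hθ, ENNReal.mul_rpow_of_nonneg _ _ hθ,
          ← ENNReal.rpow_natCast_mul, ← ENNReal.rpow_mul, ← ENNReal.rpow_natCast_mul,
          Nat.cast_add_one]
        ring
    _ ≤ C₂ ^ (1 - θ) * C₃ ^ θ * ENNReal.ofReal R ^ (n * (n + 3 - p) / (n + 1) + ε) *
          volume W ^ (p - 2) := by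
        rw [show (n + 1) * θ = p - 2 by simp only [θ]; field_simp]
        gcongr
        · exact le_of_eq (by simp only [θ]; field_simp; ring)
        · exact mul_le_of_le_one_right hε.le hθ1

end Interpolation

section SlabExtension

variable {n : ℕ}

theorem volume_ball_rpow_le {ι : Type*} [Fintype ι] {R : ℝ} (hR : 1 ≤ R) {θ : ℝ} (hθ : θ ≤ 1) :
    volume (Metric.ball (0 : ι → ℝ) R) ^ θ ≤
      2 ^ Fintype.card ι * ENNReal.ofReal R ^ (Fintype.card ι : ℝ) := by
  rw [Real.volume_pi_ball 0 (by linarith), ENNReal.rpow_natCast, ← mul_pow,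
    ENNReal.ofReal_pow (by linarith), ENNReal.ofReal_mul zero_le_two, ENNReal.ofReal_ofNat]
  have hone : 1 ≤ 2 * ENNReal.ofReal R :=
    one_le_two.trans (le_mul_of_one_le_right' (ENNReal.one_le_ofReal.mpr hR))
  exact (ENNReal.rpow_le_rpow_of_exponent_le (one_le_pow_of_one_le' hone _) hθ).trans_eq
    (ENNReal.rpow_one _)

theorem volume_cubeSlab_univ_rpow_le (hn : n ≠ 0) (W : Set ℝ) {α β : ℝ} (hα : 0 ≤ α)
    (hαβ : α ≤ β) : volume (cubeSlab n Set.univ W) ^ β ≤ volume W ^ α := by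
  obtain ⟨k, rfl⟩ := Nat.exists_eq_succ_of_ne_zero hn
  have hone : volume (cubeSlab (k + 1) Set.univ W) ≤ 1 :=
    (measure_mono Set.inter_subset_left).trans_eq (by simp [Real.volume_Icc_pi])
  have hW : volume (cubeSlab (k + 1) Set.univ W) ≤ volume W :=
    (measure_mono (t := cubeSlab (k + 1) (Set.Icc 0 1) W) fun ξ hξ =>
      ⟨hξ.1, ⟨hξ.1.1 0, hξ.1.2 0⟩, hξ.2.2⟩).trans
        ((volume_cubeSlab_le (Set.Icc 0 1) W).trans_eq (by simp))
  exact (ENNReal.rpow_le_rpow_of_exponent_ge hone hαβ).trans (ENNReal.rpow_le_rpow hW hα)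

theorem support_subset_cubeSlab_univ {W : Set ℝ} {f : (Fin (n + 1) → ℝ) → ℂ}
    (hf : Function.support f ⊆ Set.Icc 0 1 ∩ {ξ | ξ (Fin.last n) ∈ W}) :
    Function.support f ⊆ cubeSlab n Set.univ W :=
  fun _ hξ => ⟨(hf hξ).1, Set.mem_univ _, (hf hξ).2⟩

theorem extOp_eq_oscIntegral_of_support_subset {d : ℕ} (Q : (Fin d → ℝ) → Fin n → ℝ)
    {f : (Fin d → ℝ) → ℂ} {s : Set (Fin d → ℝ)} (hs : s ⊆ Set.Icc 0 1)
    (hf : Function.support f ⊆ s) :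
    extOp d n Q f = oscIntegral (volume.restrict s) (graphMap Q) f := by
  rw [extOp_eq_oscIntegral, oscIntegral_restrict_of_support_subset hf,
    oscIntegral_restrict_of_support_subset (hf.trans hs)]

theorem rpow_loss_mul_rpow_one_div {ρ : ℝ≥0∞} (hρ0 : ρ ≠ 0) (hρ : ρ ≠ ∞) (C w : ℝ≥0∞)
    (e ε : ℝ) {p : ℝ} (hp : 0 < p) :
    (C * ρ ^ (e + ε) * w ^ (p - 2) * (ρ ^ ε) ^ (p - 1)) ^ (1 / p) =
      C ^ (1 / p) * ρ ^ (e / p + ε) * w ^ (1 - 2 / p) := by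
  rw [mul_right_comm, mul_assoc C, ← ENNReal.rpow_mul, ← ENNReal.rpow_add _ _ hρ0 hρ,
    ENNReal.mul_rpow_of_nonneg _ _ (by positivity), ENNReal.mul_rpow_of_nonneg _ _ (by positivity),
    ← ENNReal.rpow_mul, ← ENNReal.rpow_mul]
  congr 3
  · field_simp
    ring
  · field_simp

theorem volume_ball_rpow_le_mul_rpow {ι : Type*} [Fintype ι] {R : ℝ} (hR : 1 ≤ R) {ε p : ℝ}
    (hp : 2 ≤ p) {N : ℕ} (hN : Fintype.card ι ≤ ε * N) :
    volume (Metric.ball (0 : ι → ℝ) R) ^ (1 / p) ≤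
      2 ^ Fintype.card ι * ((ENNReal.ofReal R ^ ε) ^ N) ^ (p - 1) := by
  refine (volume_ball_rpow_le hR ((div_le_one (by linarith)).mpr (by linarith))).trans ?_
  rw [← ENNReal.rpow_mul_natCast, ← ENNReal.rpow_mul]
  gcongr
  · exact ENNReal.one_le_ofReal.mpr hR
  · exact hN.trans (le_mul_of_one_le_right ((Nat.cast_nonneg _).trans hN) (by linarith))

theorem RestrictedTypeBound.eLpNorm_extOp_le (hn : n ≠ 0) {R : ℝ} (hR : 1 ≤ R)
    {φ : Fin n → ℝ → ℝ} (hφ : ∀ j, Measurable (φ j)) {W : Set ℝ} {ε p e : ℝ} (hε : 0 < ε)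
    (hp : 2 ≤ p) (he : 0 ≤ e) {C : ℝ≥0∞}
    (h : RestrictedTypeBound (volume.restrict (cubeSlab n Set.univ W)) (graphMap (coupledForms φ))
      (volume.restrict (Metric.ball 0 R)) p
      (C * ENNReal.ofReal R ^ (e + ε) * volume W ^ (p - 2)))
    {N : ℕ} (hN : (n + 1 + n : ℕ) ≤ ε * N) {f : (Fin (n + 1) → ℝ) → ℂ} (hf : Measurable f)
    (hfW : Function.support f ⊆ Set.Icc 0 1 ∩ {ξ | ξ (Fin.last n) ∈ W}) :
    eLpNorm (extOp (n + 1) n (coupledForms φ) f) (ENNReal.ofReal p)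
        (volume.restrict (Metric.ball 0 R)) ≤
      ((N + 1) * C ^ (1 / p) + 2 ^ (n + 1 + n)) * ENNReal.ofReal R ^ (e / p + ε) *
        volume W ^ (1 - 2 / p) * eLpNorm f (ENNReal.ofReal p) volume := by
  have hp0 : 0 < p := by linarith
  set ρ := ENNReal.ofReal R
  have hρ1 : 1 ≤ ρ := ENNReal.one_le_ofReal.mpr hR
  have hρ0 : ρ ≠ 0 := (zero_lt_one.trans_le hρ1).ne'
  obtain ⟨r, hr⟩ : ∃ r : NNReal, (r : ℝ≥0∞) = ρ ^ ε :=
    ⟨_, ENNReal.coe_toNNReal (ENNReal.rpow_ne_top_of_nonneg hε.le ENNReal.ofReal_ne_top)⟩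
  have hr1 : 1 ≤ r := by
    rw [← ENNReal.one_le_coe_iff, hr]
    exact ENNReal.one_le_rpow hρ1 hε
  have hball : volume.restrict (Metric.ball (0 : Fin (n + 1 + n) → ℝ) R) Set.univ ^ (1 / p) ≤
      2 ^ (n + 1 + n) * ((r : ℝ≥0∞) ^ N) ^ (p - 1) := by
    rw [Measure.restrict_apply_univ, hr]
    simpa only [Fintype.card_fin] using
      volume_ball_rpow_le_mul_rpow (ι := Fin (n + 1 + n)) hR hp (by rwa [Fintype.card_fin])
  have : IsFiniteMeasure (volume.restrict (cubeSlab n Set.univ W)) :=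
    ⟨by simpa using volume_cubeSlab_ne_top.lt_top⟩
  have hs := support_subset_cubeSlab_univ hfW
  have hbound := h.eLpNorm_le (measurable_graphMap (measurable_coupledForms hφ)) (by linarith)
    hf hr1 hball
  rw [eLpNorm_restrict_eq_of_support_subset hs, hr, Measure.restrict_apply_univ,
    rpow_loss_mul_rpow_one_div hρ0 ENNReal.ofReal_ne_top _ _ _ _ (by linarith)] at hbound
  rw [extOp_eq_oscIntegral_of_support_subset (s := cubeSlab n Set.univ W) _ Set.inter_subset_left
    hs]
  have htail : volume (cubeSlab n Set.univ W) ^ (1 - 1 / p) ≤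
      ρ ^ (e / p + ε) * volume W ^ (1 - 2 / p) := by
    refine (volume_cubeSlab_univ_rpow_le hn W ?_ ?_).trans
      (le_mul_of_one_le_left' (ENNReal.one_le_rpow hρ1 (by positivity)))
    · rwa [sub_nonneg, div_le_one hp0]
    · gcongr
      exact one_le_two
  calc _ ≤ _ := hbound
    _ ≤ ((N + 1) * (C ^ (1 / p) * ρ ^ (e / p + ε) * volume W ^ (1 - 2 / p)) +
          2 ^ (n + 1 + n) * (ρ ^ (e / p + ε) * volume W ^ (1 - 2 / p))) *
          eLpNorm f (ENNReal.ofReal p) volume := by gcongr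
    _ = _ := by ring

theorem ofReal_rpow_mul_slabWidth_rpow {R : ℝ} (hR : 0 < R) (n : ℕ) {p : ℝ} (hp : p ≠ 0) (ε : ℝ) :
    ENNReal.ofReal R ^ (n * (n + 3 - p) / ((n + 1) * p) + ε) *
        ENNReal.ofReal (R ^ (-(1 / 2) : ℝ)) ^ (1 - 2 / p) =
      ENNReal.ofReal (R ^ (((n : ℝ) ^ 2 + 4 * n + 1) / ((n + 1) * p) -
        (3 * n + 1) / (2 * (n + 1)) + ε)) := by
  rw [← ENNReal.ofReal_rpow_of_pos hR, ← ENNReal.ofReal_rpow_of_pos hR, ← ENNReal.rpow_mul,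
    ← ENNReal.rpow_add _ _ (ENNReal.ofReal_pos.mpr hR).ne' ENNReal.ofReal_ne_top]
  congr 1
  field_simp
  ring

theorem statement18_general (n : ℕ) (hn : n ≠ 0) (ε : ℝ) (hε : 0 < ε) (p : ℝ) (hp2 : 2 ≤ p)
    (hpn : p ≤ n + 3) :
    ∃ C : ℝ≥0∞, C < ∞ ∧ ∀ R : ℝ, 1 ≤ R → ∀ φ : Fin n → ℝ → ℝ, (∀ j, Measurable (φ j)) →
      ∀ W : Set ℝ, MeasurableSet W → ∀ f : (Fin (n + 1) → ℝ) → ℂ, Measurable f →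
        Function.support f ⊆ Set.Icc 0 1 ∩ {ξ | ξ (Fin.last n) ∈ W} →
        eLpNorm (extOp (n + 1) n (coupledForms φ) f) (ENNReal.ofReal p)
            (volume.restrict (Metric.ball 0 R)) ≤
          C * ENNReal.ofReal R ^ (n * (n + 3 - p) / ((n + 1) * p) + ε) *
            volume W ^ (1 - 2 / p) * eLpNorm f (ENNReal.ofReal p) volume := by
  obtain ⟨C, hC, h⟩ := exists_restrictedTypeBound_coupledForms hn hε hp2 hpn
  obtain ⟨N, hN⟩ := exists_nat_ge ((n + 1 + n : ℕ) / ε)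
  refine ⟨(N + 1) * C ^ (1 / p) + 2 ^ (n + 1 + n), ?_, fun R hR φ hφ W hW f hf hfW => ?_⟩
  · have hCp : C ^ (1 / p) ≠ ∞ := ENNReal.rpow_ne_top_of_nonneg (by positivity) hC
    finiteness
  · rw [← div_div]
    exact (h R hR φ hφ W hW).eLpNorm_extOp_le hn hR hφ hε hp2
      (div_nonneg (mul_nonneg n.cast_nonneg (by linarith)) (by positivity))
      ((div_le_iff₀' hε).mp hN) hf hfW

end SlabExtension

/-- for the surface
`Q(ξ) = (ξ₁², ξ₁ξ₂, …, ξ₁ξ_{n-1}, ξ₁ξ_n + ξ_{n+1}²)` on `ℝ^{n+1}`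
(0-indexed in Lean: `Q_j = ξ_0 ξ_j` for `j < n-1` and
`Q_{n-1} = ξ_0 ξ_{n-1} + ξ_n²`), a restriction estimate for functions
supported in a slab of width `R^{-1/2}` in the last variable. -/
theorem statement18 (n : ℕ) (hn : 2 ≤ n)
    (ε : ℝ) (hε : 0 < ε) (p : ℝ) (hp2 : 2 ≤ p) (hpn : p ≤ (n : ℝ) + 3) :
    ∃ C : ℝ≥0∞, C < ⊤ ∧
      ∀ R : ℝ, 1 ≤ R →
      ∀ c : ℝ, 0 ≤ c → c + R ^ (-(1/2) : ℝ) ≤ 1 →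
      ∀ f : (Fin (n + 1) → ℝ) → ℂ, Measurable f →
        Function.support f ⊆ Set.Icc 0 1 ∩
          {ξ : Fin (n + 1) → ℝ |
            ξ ⟨n, by omega⟩ ∈ Set.Icc c (c + R ^ (-(1/2) : ℝ))} →
        eLpNorm
          (extOp (n + 1) n (fun ξ j =>
            ξ ⟨0, by omega⟩ * ξ ⟨(j : ℕ), by have := j.isLt; omega⟩ +
              (if (j : ℕ) = n - 1 then ξ ⟨n, by omega⟩ ^ 2 else 0)) f)
          (ENNReal.ofReal p)
          (volume.restrict (Metric.ball (0 : Fin ((n + 1) + n) → ℝ) R)) ≤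
        C * ENNReal.ofReal
            (R ^ (((n : ℝ) ^ 2 + 4 * n + 1) / (((n : ℝ) + 1) * p) -
              (3 * (n : ℝ) + 1) / (2 * ((n : ℝ) + 1)) + ε)) *
          eLpNorm f (ENNReal.ofReal p) volume := by
  obtain ⟨C, hC, h⟩ := statement18_general n (by omega) ε hε p hp2 hpn
  refine ⟨C, hC, fun R hR c _ _ f hf hfc => ?_⟩
  have hslab := h R hR (fun j t => if (j : ℕ) = n - 1 then t ^ 2 else 0)
    (fun j => by split_ifs <;> fun_prop) _ measurableSet_Icc f hf hfc
  rwa [Real.volume_Icc, add_sub_cancel_left, mul_assoc C,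
    ofReal_rpow_mul_slabWidth_rpow (by linarith) n (by linarith)] at hslab
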